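/- arXiv:1709.06732 — 3 statements merged into one kernel-verified Lean document; each statement's English description precedes it below -/
import Mathlib

section
/- The system of equations Z₁³ + Z₂³ + 9Z₃³ = 0 and 3^a Z₁ + 3^b Z₂ + Z₃ = 0 has no solution (a, b, [Z₁ : Z₂ : Z₃]) where a > b ≥ 0 are integers and [Z₁ : Z₂ : Z₃] ∈ ℙ²(ℚ). (This is the Brassil–Reichstein conjecture.) -/
lemma q_floor (r q : ℕ) (hr : r < q) (h : ¬ 6*r/q ≤ 4*r/q + 3*r/q) :
    q ≤ 6*r ∧ 4*r < q ∧ 6*r/q ≤ 4*r/q+3*r/q+1 := by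
  have hq : 0 < q := by omega
  have h1 := Nat.div_mul_le_self (6*r) q
  have h2 := Nat.lt_div_mul_add (a := 6*r) hq
  have h3 := Nat.div_mul_le_self (4*r) q
  have h4 := Nat.lt_div_mul_add (a := 4*r) hq
  have h5 := Nat.div_mul_le_self (3*r) q
  have h6 := Nat.lt_div_mul_add (a := 3*r) hq
  have b1 : 6*r/q < 6 := (Nat.div_lt_iff_lt_mul hq).2 (by omega)
  have b2 : 4*r/q < 4 := (Nat.div_lt_iff_lt_mul hq).2 (by omega)
  have b3 : 3*r/q < 3 := (Nat.div_lt_iff_lt_mul hq).2 (by omega)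
  generalize 6*r/q = A at *
  generalize 4*r/q = B at *
  generalize 3*r/q = C at *
  interval_cases A <;> interval_cases B <;> interval_cases C <;> omega

lemma q_key (q A B x y : ℕ) (h : q*A + x = q*B + y) (hx : x < 2*q) (hy : y < q) :
    (A = B ∧ x = y) ∨ (A + 1 = B ∧ x = y + q) := by
  rcases Nat.lt_trichotomy A B with hlt | heq | hgt
  · right
    obtain ⟨d, rfl⟩ := Nat.exists_eq_add_of_lt hlt
    have e : q * (A + d + 1) = q * A + q * d + q := by ring
    have : d = 0 := by
      by_contra hd0
      have : q * 1 ≤ q * d := Nat.mul_le_mul_left q (by omega)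
      omega
    subst this
    exact ⟨by omega, by omega⟩
  · left
    subst heq
    exact ⟨rfl, by omega⟩
  · exfalso
    obtain ⟨d, rfl⟩ := Nat.exists_eq_add_of_lt hgt
    have e : q * (B + d + 1) = q * B + q * d + q := by ring
    omega

lemma q_ineq (m q k l N N' : ℕ) (hq : 2 ≤ q) (hkl : k + l = 4*m)
    (hs : 3 * (N % q) = 1 + q ∨ 3 * (N % q) = 1 + 2*q) (hs' : N % q + N' % q = q) :
    6*m/q + m/q + (k/q + (l+N)/q) + (l/q + (k+N')/q) ≤
      4*m/q + 3*m/q + (k+l+N)/q + (k+l+N')/q := by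
  have hq0 : 0 < q := by omega
  have e1 : k/q + (l+N)/q ≤ (k+l+N)/q := by
    rw [add_assoc]; exact Nat.div_add_div_le_add_div
  have e2 : l/q + (k+N')/q ≤ (k+l+N')/q := by
    rw [show k + l + N' = l + (k+N') by ring]; exact Nat.div_add_div_le_add_div
  have hm := Nat.div_add_mod m q
  set μ := m/q
  have hr : m % q < q := Nat.mod_lt _ hq0
  set r := m % q
  have d6 : 6*m/q = 6*μ + 6*r/q := by
    rw [← hm, show 6*(q*μ+r) = 6*r + q*(6*μ) by ring, Nat.add_mul_div_left _ _ hq0]; ring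
  have d4 : 4*m/q = 4*μ + 4*r/q := by
    rw [← hm, show 4*(q*μ+r) = 4*r + q*(4*μ) by ring, Nat.add_mul_div_left _ _ hq0]; ring
  have d3 : 3*m/q = 3*μ + 3*r/q := by
    rw [← hm, show 3*(q*μ+r) = 3*r + q*(3*μ) by ring, Nat.add_mul_div_left _ _ hq0]; ring
  by_cases h : 6*r/q ≤ 4*r/q + 3*r/q
  · omega
  obtain ⟨g1, g2, g3⟩ := q_floor r q hr h
  suffices k/q + (l+N)/q + 1 ≤ (k+l+N)/q ∨ l/q + (k+N')/q + 1 ≤ (k+l+N')/q by omega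
  by_contra hcon
  push Not at hcon
  obtain ⟨c1, c2⟩ := hcon
  have hk := Nat.div_add_mod k q
  have hl := Nat.div_add_mod l q
  have hN := Nat.div_add_mod N q
  have hN' := Nat.div_add_mod N' q
  have hk0 := Nat.mod_lt k hq0
  have hl0 := Nat.mod_lt l hq0
  -- (k+l+N) = 4m + N
  have f1 : (k+l+N)/q = 4*μ + N/q + 1 := by
    have e : (4*r + N%q)/q = 1 := by
      rw [Nat.div_eq_iff hq0]; constructor <;> omega
    rw [hkl, ← hm]
    conv_lhs => rw [← hN, show 4*(q*μ+r) + (q*(N/q) + N%q) = (4*r+N%q) + q*(4*μ+N/q) by ring, Nat.add_mul_div_left _ _ hq0, e]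
    ring
  have f2 : (k+l+N')/q = 4*μ + N'/q + 1 := by
    have e : (4*r + N'%q)/q = 1 := by
      rw [Nat.div_eq_iff hq0]; constructor <;> omega
    rw [hkl, ← hm]
    conv_lhs => rw [← hN', show 4*(q*μ+r) + (q*(N'/q) + N'%q) = (4*r+N'%q) + q*(4*μ+N'/q) by ring, Nat.add_mul_div_left _ _ hq0, e]
    ring
  have f3 : (l+N)/q = l/q + N/q + (l%q + N%q)/q := by
    conv_lhs => rw [← hl, ← hN, show q*(l/q) + l%q + (q*(N/q) + N%q) = (l%q+N%q) + q*(l/q+N/q) by ring, Nat.add_mul_div_left _ _ hq0]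
    ring
  have f4 : (k+N')/q = k/q + N'/q + (k%q + N'%q)/q := by
    conv_lhs => rw [← hk, ← hN', show q*(k/q) + k%q + (q*(N'/q) + N'%q) = (k%q+N'%q) + q*(k/q+N'/q) by ring, Nat.add_mul_div_left _ _ hq0]
    ring
  have hsum : q * (k/q + l/q) + (k%q + l%q) = q*(4*μ) + 4*r := by
    have : q * (k/q + l/q) + (k%q + l%q) = k + l := by
      conv_rhs => rw [← hk, ← hl]
      ring
    rw [this, hkl, ← hm]; ring
  have key : (k/q + l/q = 4*μ ∧ k%q + l%q = 4*r) ∨ (k/q+l/q + 1 = 4*μ ∧ k%q + l%q = 4*r + q) := by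
    exact q_key q _ _ _ _ hsum (by omega) g2
  have hb1 : (l%q + N%q)/q = 0 ∨ q ≤ l%q + N%q := by
    by_cases h : l%q + N%q < q
    · left; exact Nat.div_eq_of_lt h
    · right; omega
  have hb2 : (k%q + N'%q)/q = 0 ∨ q ≤ k%q + N'%q := by
    by_cases h : k%q + N'%q < q
    · left; exact Nat.div_eq_of_lt h
    · right; omega
  have hb3 : (l%q + N%q)/q < 2 := (Nat.div_lt_iff_lt_mul hq0).2 (by omega)
  rw [f1, f3] at c1
  rw [f2, f4] at c2
  generalize (l%q + N%q)/q = E1 at *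
  generalize (k%q + N'%q)/q = E2 at *
  omega

def UU (n k : ℕ) : ℕ := ∏ j ∈ Finset.range k, (3*(n-j)+1)
def VV (n k : ℕ) : ℕ := ∏ j ∈ Finset.range k, (3*(n-j)-1)

lemma UU_pos (n k : ℕ) : 0 < UU n k := Finset.prod_pos (fun _ _ => by omega)
lemma VV_pos (n k : ℕ) (h : k ≤ n) : 0 < VV n k :=
  Finset.prod_pos (fun j hj => by have := Finset.mem_range.1 hj; omega)

lemma fac_add (p K a t : ℕ) (hp : p.Prime) (ha : 0 < a) (haK : a < p^K) :
    (a + p^K*t).factorization p = a.factorization p := by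
  have hf : a.factorization p < K := by
    by_contra h
    push Not at h
    have := (hp.pow_dvd_iff_le_factorization ha.ne').2 h
    exact absurd (Nat.le_of_dvd ha this) (by omega)
  have h0 : a + p^K*t ≠ 0 := by omega
  apply le_antisymm
  · by_contra h
    push Not at h
    have h1 : p^(a.factorization p + 1) ∣ a + p^K*t := (hp.pow_dvd_iff_le_factorization h0).2 h
    have h2 : p^(a.factorization p + 1) ∣ p^K*t := Dvd.dvd.mul_right (pow_dvd_pow p hf) t
    have h3 := (Nat.dvd_add_left h2).1 h1
    have := (hp.pow_dvd_iff_le_factorization ha.ne').1 h3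
    omega
  · rw [← hp.pow_dvd_iff_le_factorization h0]
    exact dvd_add ((hp.pow_dvd_iff_le_factorization ha.ne').2 le_rfl)
      (Dvd.dvd.mul_right (pow_dvd_pow p hf.le) t)

lemma fac_three (p x : ℕ) (hp : p.Prime) (h3 : p ≠ 3) (hx : x ≠ 0) :
    (3*x).factorization p = x.factorization p := by
  rw [Nat.factorization_mul (by norm_num) hx]
  simp [Nat.prime_three.factorization, Finsupp.single_apply, Ne.symm h3]

lemma fac_UU (p K n k N t : ℕ) (hp : p.Prime) (h3 : p ≠ 3) (hk : k ≤ n) (hn : 3*n+1 < p^K)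
    (hN : 3*N = 1 + p^K*t) :
    (UU n k).factorization p + (n+N-k).factorial.factorization p = (n+N).factorial.factorization p := by
  have h := Nat.factorial_mul_descFactorial (show k ≤ n+N by omega)
  have hd : (n+N).descFactorial k ≠ 0 := by
    rw [Ne, Nat.descFactorial_eq_zero_iff_lt]; omega
  rw [← h, Nat.factorization_mul (Nat.factorial_ne_zero _) hd, Finsupp.add_apply, add_comm]
  congr 1
  rw [UU, Nat.descFactorial_eq_prod_range, Nat.factorization_prod_apply, Nat.factorization_prod_apply]
  · apply Finset.sum_congr rfl
    intro j hj
    have hj' := Finset.mem_range.1 hj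
    rw [← fac_three p (n+N-j) hp h3 (by omega), ← fac_add p K (3*(n-j)+1) t hp (by omega) (by omega)]
    congr 2
    omega
  · intro j hj; have hj' := Finset.mem_range.1 hj; omega
  · intro j hj; have hj' := Finset.mem_range.1 hj; omega

lemma fac_VV (p K n k N t : ℕ) (hp : p.Prime) (h3 : p ≠ 3) (hk : k ≤ n) (hn : 3*n+1 < p^K)
    (hN : 3*N + 1 = p^K*t) :
    (VV n k).factorization p + (n+N-k).factorial.factorization p = (n+N).factorial.factorization p := by
  have h := Nat.factorial_mul_descFactorial (show k ≤ n+N by omega)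
  have hd : (n+N).descFactorial k ≠ 0 := by
    rw [Ne, Nat.descFactorial_eq_zero_iff_lt]; omega
  rw [← h, Nat.factorization_mul (Nat.factorial_ne_zero _) hd, Finsupp.add_apply, add_comm]
  congr 1
  rw [VV, Nat.descFactorial_eq_prod_range, Nat.factorization_prod_apply, Nat.factorization_prod_apply]
  · apply Finset.sum_congr rfl
    intro j hj
    have hj' := Finset.mem_range.1 hj
    rw [← fac_three p (n+N-j) hp h3 (by omega), ← fac_add p K (3*(n-j)-1) t hp (by omega) (by omega)]
    congr 2
    omega
  · intro j hj; have hj' := Finset.mem_range.1 hj; omega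
  · intro j hj; have hj' := Finset.mem_range.1 hj; omega

lemma mod_facts (q c N N' t : ℕ) (hq : 2 ≤ q) (hN : 3*N = 1 + q*c*t) (hN' : N + N' = q*c) :
    (3 * (N % q) = 1 + q ∨ 3 * (N % q) = 1 + 2*q) ∧ N % q + N' % q = q := by
  have hq0 : 0 < q := by omega
  have hm := Nat.div_add_mod N q
  have hm' := Nat.div_add_mod N' q
  have hl := Nat.mod_lt N hq0
  have hl' := Nat.mod_lt N' hq0
  have h1 : q * (3*(N/q)) + 3*(N%q) = q*(c*t) + 1 := by
    rw [mul_assoc] at hN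
    have : q * (3*(N/q)) + 3*(N%q) = 3*N := by nth_rewrite 3 [← hm]; ring
    rw [← this] at hN
    omega
  have h2 : (3 * (N % q) = 1 + q ∨ 3 * (N % q) = 1 + 2*q) := by
    rcases Nat.lt_or_ge (c*t) (3*(N/q)) with hlt | hge
    · obtain ⟨d, hd⟩ := Nat.exists_eq_add_of_lt hlt
      rw [hd] at h1
      have : q * (c*t+d+1) = q*(c*t) + q*d + q := by ring
      omega
    · obtain ⟨d, hd⟩ := Nat.exists_eq_add_of_le hge
      rw [hd] at h1
      have e : q * (3*(N/q)+d) = q*(3*(N/q)) + q*d := by ring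
      have e2 : 3*(N%q) = q*d+1 := by omega
      have : d < 3 := by
        by_contra hd3
        have : q*3 ≤ q*d := Nat.mul_le_mul_left q (by omega)
        omega
      interval_cases d
      · omega
      · left; omega
      · right; omega
  refine ⟨h2, ?_⟩
  have h3 : q * (N/q + N'/q) + (N%q + N'%q) = q*c + 0 := by
    rw [add_zero, ← hN']; conv_rhs => rw [← hm, ← hm']
    ring
  rcases q_key q _ _ _ _ h3 (by omega) hq0 with h | h
  · omega
  · omega

lemma exists_NN (Q : ℕ) (h1 : 1 ≤ Q) (h : Q % 3 ≠ 0) :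
    ∃ N N' t t' : ℕ, 3*N = 1 + Q*t ∧ 3*N' + 1 = Q*t' ∧ N + N' = Q := by
  rcases (show Q % 3 = 1 ∨ Q % 3 = 2 by omega) with h | h
  · refine ⟨(1+Q*2)/3, Q - (1+Q*2)/3, 2, 1, ?_, ?_, ?_⟩ <;> omega
  · refine ⟨(1+Q*1)/3, Q - (1+Q*1)/3, 1, 2, ?_, ?_, ?_⟩ <;> omega

open Nat in
lemma integrality (m k l : ℕ) (hkl : k + l = 4*m) :
    (6*m)! * m ! * k ! * l ! ∣ 3^(2*m) * (4*m)! * (3*m)! * UU (4*m) k * VV (4*m) l := by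
  have hU := (UU_pos (4*m) k).ne'
  have hV := (VV_pos (4*m) l (by omega)).ne'
  have f := Nat.factorial_ne_zero
  rw [← Nat.factorization_prime_le_iff_dvd]
  rotate_left
  · simp [f]
  · simp [f, hU, hV]
  intro p hp
  have e1 : ((6*m)! * m ! * k ! * l !).factorization p = (6*m)!.factorization p + (m !).factorization p + (k !).factorization p + (l !).factorization p := by
    rw [Nat.factorization_mul, Nat.factorization_mul, Nat.factorization_mul] <;> simp [f]
  have e2 : (3^(2*m) * (4*m)! * (3*m)! * UU (4*m) k * VV (4*m) l).factorization p = (3^(2*m)).factorization p + (4*m)!.factorization p + (3*m)!.factorization p + (UU (4*m) k).factorization p + (VV (4*m) l).factorization p := by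
    rw [Nat.factorization_mul, Nat.factorization_mul, Nat.factorization_mul, Nat.factorization_mul] <;> simp [f, hU, hV]
  rw [e1, e2]
  by_cases h3 : p = 3
  · subst h3
    have a1 : (3^(2*m)).factorization 3 = 2*m := by
      rw [Nat.factorization_pow]; simp [Nat.prime_three.factorization]
    have a2 : (6*m)!.factorization 3 = (2*m)!.factorization 3 + 2*m := by
      rw [show 6*m = 3*(2*m) by ring]; exact Nat.factorization_factorial_mul hp
    have a3 : (3*m)!.factorization 3 = (m)!.factorization 3 + m := Nat.factorization_factorial_mul hp
    have a4 := Nat.factorization_factorial_le_div_pred hp (2*m)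
    have a5 : (k !).factorization 3 + (l !).factorization 3 ≤ (4*m)!.factorization 3 := by
      have : k ! * l ! ∣ (4*m)! := by rw [← hkl]; exact Nat.factorial_mul_factorial_dvd_factorial_add k l
      have := (Nat.factorization_le_iff_dvd (by simp [f]) (f _)).2 this 3
      rwa [Nat.factorization_mul (f _) (f _)] at this
    rw [show 2*m/(3-1) = m by omega] at a4
    omega
  · set K := 12*m+10 with hK
    have hKp : K < p^K := Nat.lt_pow_self hp.one_lt
    have hp3 : (p^K) % 3 ≠ 0 := by
      intro h
      have := Nat.prime_three.dvd_of_dvd_pow (Nat.dvd_of_mod_eq_zero h)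
      exact h3 ((Nat.prime_dvd_prime_iff_eq Nat.prime_three hp).1 this).symm
    obtain ⟨N, N', t, t', hN, hN', hNN⟩ := exists_NN (p^K) (by omega) hp3
    have u1 := fac_UU p K (4*m) k N t hp h3 (by omega) (by omega) hN
    have u2 := fac_VV p K (4*m) l N' t' hp h3 (by omega) (by omega) hN'
    rw [show 4*m+N-k = l+N by omega] at u1
    rw [show 4*m+N'-l = k+N' by omega] at u2
    have hbig : p^(K+1) ≥ 2*p^K := by rw [pow_succ, mul_comm]; exact Nat.mul_le_mul_right _ hp.two_le
    have leg : ∀ x, x < p^(K+1) → (x !).factorization p = ∑ i ∈ Finset.Ico 1 (K+1), x / p^i := by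
      intro x hx
      apply Nat.factorization_factorial hp
      exact Nat.log_lt_of_lt_pow' (by omega) hx
    rw [leg (l+N) (by omega), leg (4*m+N) (by omega)] at u1
    rw [leg (k+N') (by omega), leg (4*m+N') (by omega)] at u2
    rw [leg (6*m) (by omega), leg m (by omega), leg k (by omega), leg l (by omega), leg (4*m) (by omega), leg (3*m) (by omega)]
    have main : ∑ i ∈ Finset.Ico 1 (K+1), (6*m/p^i + m/p^i + (k/p^i + (l+N)/p^i) + (l/p^i + (k+N')/p^i)) ≤ ∑ i ∈ Finset.Ico 1 (K+1), (4*m/p^i + 3*m/p^i + (k+l+N)/p^i + (k+l+N')/p^i) := by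
      apply Finset.sum_le_sum
      intro i hi
      obtain ⟨hi1, hi2⟩ := Finset.mem_Ico.1 hi
      have hq : 2 ≤ p^i := le_trans hp.two_le (Nat.le_self_pow (by omega) p)
      obtain ⟨c, hc⟩ := pow_dvd_pow p (show i ≤ K by omega)
      rw [hc] at hN hNN
      obtain ⟨g1, g2⟩ := mod_facts (p^i) c N N' t hq hN hNN
      exact q_ineq m (p^i) k l N N' hq hkl g1 g2
    simp only [Finset.sum_add_distrib, hkl] at main
    omega

open Polynomial in
lemma ode_of_rec (F : ℝ[X]) (μ : ℝ) (n : ℕ)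
    (h : ∀ k : ℕ, ((k:ℝ)+1)*((k:ℝ)+1-μ)*F.coeff (k+1) = ((n:ℝ)-k)*((n:ℝ)+μ-k)*F.coeff k) :
    (1 - X) * (X * derivative (X * derivative F) - C μ * (X * derivative F))
      = X * (- (C (2*(n:ℝ)) * (X * derivative F)) + C ((n:ℝ)*(n+μ)) * F) := by
  have hth : ∀ (G : ℝ[X]) (k : ℕ), (X * derivative G).coeff k = k * G.coeff k := by
    intro G k
    cases k with
    | zero => simp
    | succ k => rw [coeff_X_mul, coeff_derivative]; push_cast; ring
  ext k
  cases k with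
  | zero =>
    rw [sub_mul, coeff_sub, one_mul]
    simp
  | succ k =>
    rw [sub_mul, coeff_sub, one_mul, coeff_X_mul, coeff_X_mul]
    simp only [coeff_sub, coeff_add, coeff_neg, coeff_C_mul, hth]
    have := h k
    push_cast
    linear_combination this

open Polynomial in
lemma wr_solve (U : ℝ[X]) (N : ℕ) (h : (1 - X) * derivative U = - (C (N:ℝ) * U)) :
    U = C (U.coeff 0) * (1 - X)^N := by
  set V := U - C (U.coeff 0) * (1 - X)^N with hV
  have hd : (1 - X) * derivative V = - (C (N:ℝ) * V) := by
    have e : (1 - X : ℝ[X]) * derivative ((1 - X : ℝ[X])^N) = - (C (N:ℝ) * (1-X)^N) := by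
      cases N with
      | zero => simp
      | succ N =>
        rw [derivative_pow]
        simp
        ring
    rw [hV, derivative_sub, derivative_C_mul]
    linear_combination h - C (U.coeff 0) * e
  have h0 : V.coeff 0 = 0 := by
    rw [hV, coeff_sub, coeff_C_mul]
    have : ((1 - X : ℝ[X])^N).coeff 0 = 1 := by
      rw [coeff_zero_eq_eval_zero]; simp
    rw [this]; ring
  have hall : ∀ k, V.coeff k = 0 := by
    intro k
    induction k with
    | zero => exact h0
    | succ k ih =>
      have := congrArg (fun G => G.coeff k) hd
      simp only [sub_mul, one_mul, coeff_sub, coeff_neg, coeff_C_mul, ih, mul_zero, neg_zero] at this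
      rw [coeff_derivative] at this
      have h2 : (X * derivative V).coeff k = 0 := by
        cases k with
        | zero => simp
        | succ j => rw [coeff_X_mul, coeff_derivative, ih]; ring
      rw [h2, sub_zero] at this
      rcases mul_eq_zero.1 this with h | h
      · exact h
      · exfalso; have : (0:ℝ) ≤ k := Nat.cast_nonneg k; linarith
  have : V = 0 := by ext k; simp [hall k]
  linear_combination this

open Polynomial in
lemma wronskian (P Q : ℝ[X]) (ν : ℝ) (n : ℕ)
    (hP : ∀ k : ℕ, ((k:ℝ)+1)*((k:ℝ)+1-ν)*P.coeff (k+1) = ((n:ℝ)-k)*((n:ℝ)+ν-k)*P.coeff k)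
    (hQ : ∀ k : ℕ, ((k:ℝ)+1)*((k:ℝ)+1+ν)*Q.coeff (k+1) = ((n:ℝ)-k)*((n:ℝ)-ν-k)*Q.coeff k) :
    X * derivative P * Q - P * (X * derivative Q) - C ν * P * Q =
      C (-ν * P.coeff 0 * Q.coeff 0) * (1 - X)^(2*n) := by
  have oP := ode_of_rec P ν n hP
  have oQ := ode_of_rec Q (-ν) n (by intro k; linear_combination hQ k)
  set W := X * derivative P * Q - P * (X * derivative Q) - C ν * P * Q with hW
  have h1 : X * ((1 - X) * derivative W) = X * (- (C ((2*n : ℕ):ℝ) * W)) := by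
    rw [hW]
    simp only [derivative_sub, derivative_mul, derivative_C, derivative_X] at *
    push_cast
    simp only [map_neg, map_mul, map_add, map_natCast, map_ofNat] at *
    linear_combination Q * oP - P * oQ
  have h2 := mul_left_cancel₀ X_ne_zero h1
  have := wr_solve W (2*n) h2
  rw [this]
  congr 2
  rw [hW]
  simp [mul_coeff_zero]

lemma bern_neg (t : ℝ) (ht : 0 ≤ t) (j : ℕ) : (1+t)^j * (1 - j*t) ≤ 1 := by
  induction j with
  | zero => simp
  | succ j ih =>
    refine le_trans ?_ ih
    have h1 : (1+t)^(j+1) * (1 - ((j+1:ℕ):ℝ)*t) = (1+t)^j * ((1+t)*(1 - ((j:ℝ)+1)*t)) := by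
      push_cast; ring
    rw [h1]
    apply mul_le_mul_of_nonneg_left _ (by positivity)
    have : (0:ℝ) ≤ j := Nat.cast_nonneg j
    nlinarith [mul_nonneg this (mul_nonneg ht ht), mul_nonneg ht ht]

lemma bern_int (s : ℝ) (hs : 1 ≤ s) (k a : ℕ) :
    s^a * (1 + ((k:ℝ) - a)*(s-1)) ≤ s^k := by
  rcases le_total a k with h | h
  · obtain ⟨d, rfl⟩ := Nat.exists_eq_add_of_le h
    rw [pow_add]
    apply mul_le_mul_of_nonneg_left _ (by positivity)
    have := one_add_mul_le_pow (show (-2:ℝ) ≤ s-1 by linarith) d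
    push_cast
    calc _ = 1 + (d:ℝ)*(s-1) := by ring
      _ ≤ _ := this
      _ = _ := by ring
  · obtain ⟨d, rfl⟩ := Nat.exists_eq_add_of_le h
    have := bern_neg (s-1) (by linarith) d
    rw [pow_add, mul_assoc]
    push_cast
    have e : (1 + (s-1))^d * (1 - d*(s-1)) = s^d * (1 + ((k:ℝ) - (k+d))*(s-1)) := by ring
    rw [e] at this
    calc _ ≤ s^k * 1 := mul_le_mul_of_nonneg_left this (by positivity)
      _ = s^k := by ring

open Polynomial in
lemma Q_lower (Q : ℝ[X]) (m : ℕ) (hm : 1 ≤ m) (hdeg : Q.natDegree < 4*m+1)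
    (hpos : ∀ k, 0 ≤ Q.coeff k)
    (hQ : ∀ k : ℕ, ((k:ℝ)+1)*((k:ℝ)+1+1/3)*Q.coeff (k+1) = (((4*m:ℕ):ℝ)-k)*(((4*m:ℕ):ℝ)-1/3-k)*Q.coeff k)
    (s : ℝ) (hs : 1 ≤ s) : Q.eval 1 * s^(2*m-1) ≤ Q.eval s := by
  have oQ := ode_of_rec Q (-(1/3)) (4*m) (by intro k; linear_combination hQ k)
  have h1 := congrArg (Polynomial.eval 1) oQ
  have hd : (derivative Q).eval 1 = ∑ k ∈ Finset.range (4*m+1), Q.coeff k * k := by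
    rw [derivative_eval, sum_over_range' _ _ _ hdeg]
    · simp
    · simp
  have hm0 : (0:ℝ) < m := by exact_mod_cast hm
  have hth : ∑ k ∈ Finset.range (4*m+1), Q.coeff k * k = (4*m-1/3)/2 * Q.eval 1 := by
    rw [← hd]
    simp only [eval_mul, eval_sub, eval_X, eval_one, eval_add, eval_neg, eval_C] at h1
    push_cast at h1
    have : (m:ℝ) * ((derivative Q).eval 1) = m * ((4*m-1/3)/2 * Q.eval 1) := by linear_combination (1/8) * h1
    exact mul_left_cancel₀ hm0.ne' this
  have he1 : Q.eval 1 = ∑ k ∈ Finset.range (4*m+1), Q.coeff k := by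
    rw [eval_eq_sum_range' hdeg]; simp
  have hQ1 : 0 ≤ Q.eval 1 := by rw [he1]; exact Finset.sum_nonneg (fun k _ => hpos k)
  rw [eval_eq_sum_range' hdeg s]
  have hb : ∑ k ∈ Finset.range (4*m+1), Q.coeff k * (s^(2*m-1) * (1 + ((k:ℝ) - (2*m-1:ℕ))*(s-1))) ≤ ∑ k ∈ Finset.range (4*m+1), Q.coeff k * s^k :=
    Finset.sum_le_sum (fun k _ => mul_le_mul_of_nonneg_left (bern_int s hs k (2*m-1)) (hpos k))
  refine le_trans ?_ hb
  have hc : ((2*m-1:ℕ):ℝ) = 2*m-1 := by rw [Nat.cast_sub (by omega)]; push_cast; ring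
  have e : ∑ k ∈ Finset.range (4*m+1), Q.coeff k * (s^(2*m-1) * (1 + ((k:ℝ) - (2*m-1:ℕ))*(s-1))) =
     s^(2*m-1) * ((1 - (2*m-1)*(s-1)) * (∑ k ∈ Finset.range (4*m+1), Q.coeff k) + (s-1) * ∑ k ∈ Finset.range (4*m+1), Q.coeff k * k) := by
    rw [Finset.mul_sum, Finset.mul_sum, ← Finset.sum_add_distrib, Finset.mul_sum]
    apply Finset.sum_congr rfl
    intro k _
    rw [hc]; ring
  rw [e, hth, ← he1]
  have hsp : 0 < s^(2*m-1) := by positivity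
  rw [mul_comm]
  apply mul_le_mul_of_nonneg_left _ hsp.le
  nlinarith [mul_nonneg hQ1 (sub_nonneg.2 hs)]

open Polynomial in
theorem pade_bound (P Q : ℝ[X]) (m : ℕ) (hm : 1 ≤ m) (hdeg : Q.natDegree < 4*m+1)
    (hpos : ∀ k, 0 ≤ Q.coeff k) (hpos' : ∀ k, 0 ≤ P.coeff k) (hq0 : 0 < Q.coeff 0) (hp0 : 0 < P.coeff 0)
    (hpq : P.coeff 0 * Q.coeff 0 ≤ 1)
    (hP : ∀ k : ℕ, ((k:ℝ)+1)*((k:ℝ)+1-1/3)*P.coeff (k+1) = (((4*m:ℕ):ℝ)-k)*(((4*m:ℕ):ℝ)+1/3-k)*P.coeff k)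
    (hQ : ∀ k : ℕ, ((k:ℝ)+1)*((k:ℝ)+1+1/3)*Q.coeff (k+1) = (((4*m:ℕ):ℝ)-k)*(((4*m:ℕ):ℝ)-1/3-k)*Q.coeff k)
    (T : ℝ) (hT : 0 < T) (hP1 : P.eval 1 = T) (hQ1 : Q.eval 1 = T) :
    8 * (P.eval (9/8))^3 < 9 * (Q.eval (9/8))^3 ∧
    (9 * (Q.eval (9/8))^3 - 8 * (P.eval (9/8))^3) * (72^(4*m) * T^2) ≤ (81/512) * (9 * (Q.eval (9/8))^3) := by
  have hW := wronskian P Q (1/3) (4*m) hP hQ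
  have hevpos : ∀ (F : ℝ[X]), (∀ k, 0 ≤ F.coeff k) → 0 < F.coeff 0 → ∀ s : ℝ, 0 < s → 0 < F.eval s := by
    intro F hF hF0 s hs
    rw [eval_eq_sum_range, Finset.sum_range_succ']
    have : 0 ≤ ∑ k ∈ Finset.range F.natDegree, F.coeff (k+1) * s^(k+1) :=
      Finset.sum_nonneg (fun k _ => mul_nonneg (hF _) (by positivity))
    simp only [pow_zero, mul_one]
    linarith
  have hQp := hevpos Q hpos hq0
  have hPp := hevpos P hpos' hp0
  set c := P.coeff 0 * Q.coeff 0 with hc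
  have hc0 : 0 < c := mul_pos hp0 hq0
  have hWe : ∀ s : ℝ, s * (derivative P).eval s * Q.eval s - P.eval s * (s * (derivative Q).eval s) - 1/3 * P.eval s * Q.eval s = -(1/3)*c*((s-1)^2)^(4*m) := by
    intro s
    have := congrArg (Polynomial.eval s) hW
    simp only [eval_mul, eval_sub, eval_X, eval_one, eval_pow, eval_C] at this
    rw [this, ← pow_mul, show 1 - s = -(s-1) by ring, Even.neg_pow (by simp), hc]
    ring
  set h : ℝ → ℝ := fun s => (P.eval s)^3 / (s * (Q.eval s)^3) with hh
  have hder : ∀ s : ℝ, 0 < s → HasDerivAt h (-(c * ((s-1)^2)^(4*m) * (P.eval s)^2 / (s^2 * (Q.eval s)^4))) s := by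
    intro s hs
    have hq := hQp s hs
    have d1 := (P.hasDerivAt s).pow 3
    have d2 := (hasDerivAt_id s).mul ((Q.hasDerivAt s).pow 3)
    have d3 := d1.div d2 (by simp; exact ⟨hs.ne', hq.ne'⟩)
    refine HasDerivAt.congr_deriv (f' := _) d3 ?_
    have w := hWe s
    simp only [id, Pi.mul_apply, Pi.pow_apply]
    field_simp
    push_cast
    norm_num
    linear_combination (3 * P.eval s^2 * Q.eval s^2) * w
  have hcont : ContinuousOn h (Set.Icc 1 (9/8)) := fun s hs =>
    (hder s (by linarith [hs.1])).continuousAt.continuousWithinAt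
  have h1 : h 1 = 1 := by
    simp only [hh, hP1, hQ1]; field_simp
  have hmono : ∀ s ∈ Set.Icc (1:ℝ) (9/8), h s ≤ 1 := by
    have : AntitoneOn h (Set.Icc 1 (9/8)) := by
      apply antitoneOn_of_deriv_nonpos (convex_Icc _ _) hcont
      · intro s hs
        rw [interior_Icc] at hs
        exact (hder s (by linarith [hs.1])).differentiableAt.differentiableWithinAt
      · intro s hs
        rw [interior_Icc] at hs
        have hs0 : 0 < s := by linarith [hs.1]
        rw [(hder s hs0).deriv]
        have := hQp s hs0
        have : 0 ≤ (c * ((s-1)^2)^(4*m) * (P.eval s)^2 / (s^2 * (Q.eval s)^4)) := by positivity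
        linarith
    intro s hs
    rw [← h1]
    exact this (by norm_num) hs hs.1
  obtain ⟨ξ, hξ, hmv⟩ := exists_hasDerivAt_eq_slope h _ (show (1:ℝ) < 9/8 by norm_num) hcont
    (fun s hs => hder s (by linarith [hs.1]))
  have hξ0 : 0 < ξ := by linarith [hξ.1]
  have hξ1 : 0 < ξ - 1 := by linarith [hξ.1]
  have hqξ := hQp ξ hξ0
  have hpξ := hPp ξ hξ0
  rw [h1] at hmv
  set E := c * ((ξ-1)^2)^(4*m) * (P.eval ξ)^2 / (ξ^2 * (Q.eval ξ)^4) with hE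
  have hEpos : 0 < E := by positivity
  have h98 : 1 - h (9/8) = E/8 := by
    have : (9/8 - 1 : ℝ) = 1/8 := by norm_num
    rw [this] at hmv
    field_simp at hmv
    linarith
  -- bound E
  have hle := hmono ξ ⟨hξ.1.le, hξ.2.le⟩
  have hPQ : P.eval ξ ≤ ξ * Q.eval ξ := by
    simp only [hh] at hle
    rw [div_le_one (by positivity)] at hle
    apply le_of_pow_le_pow_left₀ (n := 3) (by norm_num) (by positivity)
    calc _ ≤ ξ * (Q.eval ξ)^3 := hle
      _ ≤ ξ^3 * (Q.eval ξ)^3 := by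
        apply mul_le_mul_of_nonneg_right _ (by positivity)
        nlinarith [hξ.1, mul_pos hξ0 hξ1]
      _ = _ := by ring
  have hQl := Q_lower Q m hm hdeg hpos hQ ξ hξ.1.le
  rw [hQ1] at hQl
  have hE2 : E ≤ (81/64) / (72^(4*m) * T^2) := by
    rw [hE, div_le_div_iff₀ (by positivity) (by positivity)]
    have a1 : ((ξ-1)^2)^(4*m) * 72^(4*m) ≤ ξ^(4*m) := by
      rw [← mul_pow]
      apply pow_le_pow_left₀ (by positivity)
      nlinarith [hξ.1, hξ.2]
    have a2 : ξ^(4*m) * T^2 ≤ ξ^2 * (Q.eval ξ)^2 := by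
      have : ξ^(4*m) * T^2 = ξ^2 * (T * ξ^(2*m-1))^2 := by
        rw [mul_pow, ← pow_mul, show 4*m = 2 + (2*m-1)*2 by omega, pow_add]; ring
      rw [this]
      gcongr
    have a3 : (P.eval ξ)^2 ≤ (ξ * Q.eval ξ)^2 := by gcongr
    have a4 : ξ^2 ≤ 81/64 := by nlinarith [hξ.1, hξ.2]
    calc c * ((ξ-1)^2)^(4*m) * (P.eval ξ)^2 * (72^(4*m) * T^2)
        = c * ((((ξ-1)^2)^(4*m) * 72^(4*m)) * T^2) * (P.eval ξ)^2 := by ring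
      _ ≤ 1 * (ξ^(4*m) * T^2) * (ξ * Q.eval ξ)^2 := by gcongr
      _ ≤ 1 * (ξ^2 * (Q.eval ξ)^2) * (ξ * Q.eval ξ)^2 := by gcongr
      _ = ξ^2 * (ξ^2 * (Q.eval ξ)^4) := by ring
      _ ≤ _ := by gcongr
  have hq := hQp (9/8) (by norm_num)
  have hhv : h (9/8) * (9 * (Q.eval (9/8))^3) = 8 * (P.eval (9/8))^3 := by
    simp only [hh]; field_simp
  have hE3 : (1 - h (9/8)) * (9 * (Q.eval (9/8))^3) = 9 * (Q.eval (9/8))^3 - 8 * (P.eval (9/8))^3 := by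
    rw [sub_mul, hhv, one_mul]
  rw [h98] at hE3
  constructor
  · have : 0 < E/8 * (9 * (Q.eval (9/8))^3) := by positivity
    linarith
  · rw [← hE3]
    rw [le_div_iff₀ (by positivity)] at hE2
    calc _ = (E * (72^(4*m) * T^2)) / 8 * (9 * (Q.eval (9/8))^3) := by ring
      _ ≤ (81/64)/8 * (9 * (Q.eval (9/8))^3) := by gcongr
      _ = _ := by ring


noncomputable def cc (n k l : ℕ) : ℝ := (UU n k : ℝ) * VV n l / (3^n * k.factorial * l.factorial)

open Polynomial in
noncomputable def PP (n : ℕ) : ℝ[X] := ∑ k ∈ Finset.range (n+1), monomial k (cc n k (n-k))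
open Polynomial in
noncomputable def QQ (n : ℕ) : ℝ[X] := ∑ k ∈ Finset.range (n+1), monomial k (cc n (n-k) k)

lemma UU_succ (n k : ℕ) : UU n (k+1) = UU n k * (3*(n-k)+1) := by
  rw [UU, Finset.prod_range_succ]; rfl
lemma VV_succ (n k : ℕ) : VV n (k+1) = VV n k * (3*(n-k)-1) := by
  rw [VV, Finset.prod_range_succ]; rfl

lemma cc_nonneg (n k l : ℕ) : 0 ≤ cc n k l := by unfold cc; positivity
lemma cc_pos (n k l : ℕ) (h : l ≤ n) : 0 < cc n k l := by
  have h1 : (0:ℝ) < UU n k := by exact_mod_cast UU_pos n k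
  have h2 : (0:ℝ) < VV n l := by exact_mod_cast VV_pos n l h
  unfold cc; positivity

lemma cc_rec (k l : ℕ) : ((k:ℝ)+1)*((k:ℝ)+1-1/3)*cc (k+l+1) (k+1) l = ((l:ℝ)+1)*((l:ℝ)+1+1/3)*cc (k+l+1) k (l+1) := by
  unfold cc
  have h1 : UU (k+l+1) (k+1) = UU (k+l+1) k * (3*(l+1)+1) := by
    rw [UU_succ]; congr 3; omega
  have h2 : VV (k+l+1) (l+1) = VV (k+l+1) l * (3*k+2) := by
    rw [VV_succ]; congr 1; omega
  rw [h1, h2, Nat.factorial_succ, Nat.factorial_succ]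
  have f1 : (k.factorial:ℝ) ≠ 0 := by exact_mod_cast Nat.factorial_ne_zero k
  have f2 : (l.factorial:ℝ) ≠ 0 := by exact_mod_cast Nat.factorial_ne_zero l
  push_cast
  field_simp
  ring

open Polynomial in
lemma PP_coeff (n k : ℕ) : (PP n).coeff k = if k ≤ n then cc n k (n-k) else 0 := by
  rw [PP, finsetSum_coeff]
  simp only [coeff_monomial]
  rw [Finset.sum_ite_eq' (Finset.range (n+1)) k (fun k => cc n k (n-k))]
  simp
open Polynomial in
lemma QQ_coeff (n k : ℕ) : (QQ n).coeff k = if k ≤ n then cc n (n-k) k else 0 := by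
  rw [QQ, finsetSum_coeff]
  simp only [coeff_monomial]
  rw [Finset.sum_ite_eq' (Finset.range (n+1)) k (fun k => cc n (n-k) k)]
  simp

lemma PP_rec (n k : ℕ) : ((k:ℝ)+1)*((k:ℝ)+1-1/3)*(PP n).coeff (k+1) = ((n:ℝ)-k)*((n:ℝ)+1/3-k)*(PP n).coeff k := by
  rw [PP_coeff, PP_coeff]
  rcases Nat.lt_trichotomy k n with h | h | h
  · obtain ⟨l, rfl⟩ := Nat.exists_eq_add_of_lt h
    rw [if_pos (by omega), if_pos (by omega), show k+l+1-(k+1) = l by omega, show k+l+1-k = l+1 by omega, cc_rec]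
    push_cast; ring
  · subst h; simp
  · rw [if_neg (by omega), if_neg (by omega)]; simp

lemma QQ_rec (n k : ℕ) : ((k:ℝ)+1)*((k:ℝ)+1+1/3)*(QQ n).coeff (k+1) = ((n:ℝ)-k)*((n:ℝ)-1/3-k)*(QQ n).coeff k := by
  rw [QQ_coeff, QQ_coeff]
  rcases Nat.lt_trichotomy k n with h | h | h
  · obtain ⟨l, rfl⟩ := Nat.exists_eq_add_of_lt h
    rw [if_pos (by omega), if_pos (by omega), show k+l+1-(k+1) = l by omega, show k+l+1-k = l+1 by omega]
    have := cc_rec l k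
    rw [show l+k+1 = k+l+1 by ring] at this
    push_cast
    linear_combination -this
  · subst h; simp
  · rw [if_neg (by omega), if_neg (by omega)]; simp

lemma PP_eval (n : ℕ) (s : ℝ) : (PP n).eval s = ∑ k ∈ Finset.range (n+1), cc n k (n-k) * s^k := by
  simp [PP, Polynomial.eval_finsetSum]
lemma QQ_eval (n : ℕ) (s : ℝ) : (QQ n).eval s = ∑ k ∈ Finset.range (n+1), cc n (n-k) k * s^k := by
  simp [QQ, Polynomial.eval_finsetSum]

lemma PP_one (n : ℕ) : (PP n).eval 1 = ((2*n).choose n : ℝ) := by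
  have hU : ∀ k ≤ n, Ring.choose ((n:ℝ)+1/3) k = UU n k / (3^k * k.factorial) := by
    intro k hk
    rw [Ring.choose_eq_smul]
    have : ((descPochhammer ℤ k).smeval ((n:ℝ)+1/3)) = UU n k / 3^k := by
      induction k with
      | zero => simp [UU]
      | succ k ih =>
        rw [descPochhammer_succ_right, Polynomial.smeval_mul, ih (by omega), UU_succ]
        simp [Polynomial.smeval_sub, Polynomial.smeval_natCast]
        rw [Nat.cast_sub (by omega)]
        field_simp
        ring
    rw [this]
    simp [smul_eq_mul]
    field_simp
  have hV : ∀ k ≤ n, Ring.choose ((n:ℝ)-1/3) k = VV n k / (3^k * k.factorial) := by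
    intro k hk
    rw [Ring.choose_eq_smul]
    have : ((descPochhammer ℤ k).smeval ((n:ℝ)-1/3)) = VV n k / 3^k := by
      induction k with
      | zero => simp [VV]
      | succ k ih =>
        rw [descPochhammer_succ_right, Polynomial.smeval_mul, ih (by omega), VV_succ]
        simp [Polynomial.smeval_sub, Polynomial.smeval_natCast]
        rw [Nat.cast_sub (by omega), Nat.cast_mul, Nat.cast_sub (by omega)]
        field_simp
        push_cast
        ring
    rw [this]
    simp [smul_eq_mul]
    field_simp
  have key := Ring.add_choose_eq (r := (n:ℝ)+1/3) (s := (n:ℝ)-1/3) n (Commute.all _ _)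
  rw [show (n:ℝ)+1/3 + ((n:ℝ)-1/3) = ((2*n:ℕ):ℝ) by push_cast; ring, Ring.choose_natCast] at key
  rw [key, Finset.Nat.sum_antidiagonal_eq_sum_range_succ (fun i j => Ring.choose ((n:ℝ)+1/3) i * Ring.choose ((n:ℝ)-1/3) j), PP_eval]
  apply Finset.sum_congr rfl
  intro k hk
  have hk' : k ≤ n := by have := Finset.mem_range.1 hk; omega
  rw [hU k hk', hV (n-k) (by omega), cc]
  have : (3:ℝ)^n = 3^k * 3^(n-k) := by rw [← pow_add]; congr 1; omega
  rw [this, one_pow]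
  field_simp

lemma QQ_one (n : ℕ) : (QQ n).eval 1 = (PP n).eval 1 := by
  rw [QQ_eval, PP_eval, ← Finset.sum_range_reflect]
  apply Finset.sum_congr rfl
  intro k hk
  have hk' : k ≤ n := by have := Finset.mem_range.1 hk; omega
  rw [show n + 1 - 1 - k = n - k by omega, show n - (n-k) = k by omega]
  simp

lemma cc_zero (n : ℕ) : cc n 0 n * cc n n 0 ≤ 1 := by
  have h : UU n n * VV n n ≤ 9^n * (n.factorial * n.factorial) := by
    have : n.factorial = ∏ j ∈ Finset.range n, (n-j) := by
      rw [← Nat.descFactorial_self, Nat.descFactorial_eq_prod_range]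
    rw [this, UU, VV, ← Finset.prod_mul_distrib, ← Finset.prod_mul_distrib]
    have h9 : 9^n = ∏ j ∈ Finset.range n, 9 := by simp
    rw [h9, ← Finset.prod_mul_distrib]
    apply Finset.prod_le_prod' 
    intro j hj
    have hj' := Finset.mem_range.1 hj
    obtain ⟨x, hx⟩ : ∃ x, n - j = x + 1 := ⟨n-j-1, by omega⟩
    rw [hx, show 3*(x+1)-1 = 3*x+2 by omega]
    nlinarith
  have h' : (UU n n : ℝ) * VV n n ≤ 9^n * (n.factorial * n.factorial) := by exact_mod_cast h
  unfold cc
  rw [show UU n 0 = 1 by simp [UU], show VV n 0 = 1 by simp [VV], div_mul_div_comm, div_le_one (by positivity)]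
  have : (9:ℝ)^n = 3^n*3^n := by rw [← mul_pow]; norm_num
  rw [this] at h'
  simp
  linarith

lemma cc_le (n k l : ℕ) (h : k + l = n) : cc n k l ≤ (n+1) * ((n.choose l:ℝ))^2 := by
  have hU : UU n k ≤ (n+1) * (3^k * n.descFactorial k) := by
    have h1 : UU n k ≤ 3^k * (n+1).descFactorial k := by
      have h3 : 3^k = ∏ j ∈ Finset.range k, 3 := by simp
      rw [UU, Nat.descFactorial_eq_prod_range, h3, ← Finset.prod_mul_distrib]
      apply Finset.prod_le_prod'
      intro j hj
      have hj' := Finset.mem_range.1 hj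
      omega
    have h2 : (n+1).descFactorial k ≤ (n+1) * n.descFactorial k := by
      rw [← Nat.succ_descFactorial_succ, Nat.descFactorial_succ]
      exact Nat.le_mul_of_pos_left _ (by omega)
    calc _ ≤ _ := h1
      _ ≤ 3^k * ((n+1) * n.descFactorial k) := Nat.mul_le_mul_left _ h2
      _ = _ := by ring
  have hV : VV n l ≤ 3^l * n.descFactorial l := by
    have h3 : 3^l = ∏ j ∈ Finset.range l, 3 := by simp
    rw [VV, Nat.descFactorial_eq_prod_range, h3, ← Finset.prod_mul_distrib]
    apply Finset.prod_le_prod'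
    intro j hj
    omega
  rw [Nat.descFactorial_eq_factorial_mul_choose] at hU hV
  have hck : n.choose k = n.choose l := by rw [← h]; exact Nat.choose_symm_add
  rw [hck] at hU
  have hU' : (UU n k:ℝ) ≤ (n+1) * (3^k * (k.factorial * n.choose l)) := by exact_mod_cast hU
  have hV' : (VV n l:ℝ) ≤ 3^l * (l.factorial * n.choose l) := by exact_mod_cast hV
  unfold cc
  rw [div_le_iff₀ (by positivity)]
  calc (UU n k:ℝ) * VV n l ≤ ((n+1) * (3^k * (k.factorial * n.choose l))) * (3^l * (l.factorial * n.choose l)) := by gcongr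
    _ = (n+1) * ((n.choose l:ℝ))^2 * ((3^(k+l)) * k.factorial * l.factorial) := by rw [pow_add]; ring
    _ = _ := by rw [h]

lemma QQ_upper (m : ℕ) : 8^(4*m) * (QQ (4*m)).eval (9/8) ≤ (4*m+1) * 1331714^m := by
  set n := 4*m with hn
  rw [QQ_eval, Finset.mul_sum]
  have h8 : (Real.sqrt 8)^2 = 8 := Real.sq_sqrt (by norm_num)
  have h80 : 0 ≤ Real.sqrt 8 := Real.sqrt_nonneg 8
  have h1 : ∀ k ∈ Finset.range (n+1), 8^n * (cc n (n-k) k * (9/8:ℝ)^k) ≤ (n+1) * (3^k * (Real.sqrt 8)^(n-k) * n.choose k)^2 := by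
    intro k hk
    have hk' : k ≤ n := by have := Finset.mem_range.1 hk; omega
    have := cc_le n (n-k) k (by omega)
    have e : (8:ℝ)^n = 8^k * 8^(n-k) := by rw [← pow_add]; congr 1; omega
    have e2 : (3^k * (Real.sqrt 8)^(n-k) * (n.choose k:ℝ))^2 = 9^k * 8^(n-k) * (n.choose k:ℝ)^2 := by
      rw [mul_pow, mul_pow, ← pow_mul, ← pow_mul, mul_comm k 2, mul_comm (n-k) 2, pow_mul, pow_mul, h8]
      norm_num
    rw [e2, e]
    have e3 : (8:ℝ)^k * 8^(n-k) * (cc n (n-k) k * (9/8:ℝ)^k) = 9^k * 8^(n-k) * cc n (n-k) k := by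
      rw [div_pow]; field_simp
    rw [e3]
    calc _ ≤ 9^k * 8^(n-k) * ((n+1) * ((n.choose k:ℝ))^2) := by gcongr
      _ = _ := by ring
  refine le_trans (Finset.sum_le_sum h1) ?_
  rw [← Finset.mul_sum]
  have h2 : ∑ k ∈ Finset.range (n+1), (3^k * (Real.sqrt 8)^(n-k) * (n.choose k:ℝ))^2 ≤ (∑ k ∈ Finset.range (n+1), (3^k * (Real.sqrt 8)^(n-k) * (n.choose k:ℝ)))^2 :=
    Finset.sum_sq_le_sq_sum_of_nonneg (fun k _ => by positivity)
  rw [← add_pow] at h2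
  have h3 : ((3 + Real.sqrt 8)^n)^2 ≤ 1331714^m := by
    rw [hn, ← pow_mul, show 4*m*2 = 8*m by ring, pow_mul]
    apply pow_le_pow_left₀ (by positivity)
    have a2 : (3 + Real.sqrt 8)^2 = 17 + 6*Real.sqrt 8 := by nlinarith
    have a4 : (3 + Real.sqrt 8)^4 = 577 + 204*Real.sqrt 8 := by
      rw [show (3 + Real.sqrt 8)^4 = ((3 + Real.sqrt 8)^2)^2 by ring, a2]; nlinarith
    have a8 : (3 + Real.sqrt 8)^8 = 665857 + 235416*Real.sqrt 8 := by
      rw [show (3 + Real.sqrt 8)^8 = ((3 + Real.sqrt 8)^4)^2 by ring, a4]; nlinarith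
    rw [a8]
    have : Real.sqrt 8 ≤ 665857/235416 := by
      apply Real.sqrt_le_iff.2; constructor <;> norm_num
    linarith
  have hnc : (n:ℝ) = 4*m := by rw [hn]; push_cast; ring
  rw [hnc]
  have : (0:ℝ) ≤ 4*m+1 := by positivity
  exact mul_le_mul_of_nonneg_left (h2.trans h3) this


open Nat in
lemma lam_bound (m : ℕ) (hm : 1 ≤ m) :
    (3:ℝ)^(6*m) * (4*m)! * (3*m)! / ((6*m)! * m !) ≤ 6*m * 108^m := by
  have h1 : (4*m)! = (4*m).choose m * m ! * (3*m)! := by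
    have := Nat.choose_mul_factorial_mul_factorial (show m ≤ 4*m by omega)
    rw [show 4*m - m = 3*m by omega] at this
    exact this.symm
  have h2 : (6*m)! = (3*m).centralBinom * (3*m)! * (3*m)! := by
    have := Nat.choose_mul_factorial_mul_factorial (show 3*m ≤ 6*m by omega)
    rw [show 6*m - 3*m = 3*m by omega] at this
    rw [Nat.centralBinom, show 2*(3*m) = 6*m by ring, this]
  have h3 : 4^(3*m) ≤ 2*(3*m) * (3*m).centralBinom := Nat.four_pow_le_two_mul_self_mul_centralBinom (3*m) (by omega)
  have h4 : (4*m).choose m * 27^m ≤ 256^m := by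
    have h := add_pow (1:ℕ) 3 (4*m)
    have h5 : (1:ℕ)^m * 3^(4*m-m) * (4*m).choose m ≤ ∑ k ∈ Finset.range (4*m+1), (1:ℕ)^k * 3^(4*m-k) * (4*m).choose k :=
      Finset.single_le_sum (f := fun k => (1:ℕ)^k * 3^(4*m-k) * (4*m).choose k) (fun _ _ => Nat.zero_le _) (Finset.mem_range.2 (by omega))
    simp only [Nat.cast_id] at h
    rw [← h, show 4*m-m = 3*m by omega, pow_mul, pow_mul] at h5
    norm_num at h5
    linarith
  have h3' : (64:ℝ)^m ≤ 6*m*(3*m).centralBinom := by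
    have : (4:ℝ)^(3*m) ≤ 2*(3*m) * (3*m).centralBinom := by exact_mod_cast h3
    rw [pow_mul] at this
    norm_num at this
    linarith
  have h4' : ((4*m).choose m:ℝ) * 27^m ≤ 256^m := by exact_mod_cast h4
  rw [h2]
  rw [show ((4*m)! : ℝ) = (4*m).choose m * m ! * (3*m)! by rw [h1]; push_cast; ring]
  push_cast
  have hcb : (0:ℝ) < (3*m).centralBinom := by exact_mod_cast Nat.centralBinom_pos _
  have f1 : (0:ℝ) < (3*m)! := by exact_mod_cast Nat.factorial_pos _
  have f2 : (0:ℝ) < m ! := by exact_mod_cast Nat.factorial_pos _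
  rw [div_le_iff₀ (by positivity)]
  have e1 : (3:ℝ)^(6*m) = 27^m * 27^m := by rw [pow_mul, ← mul_pow]; norm_num
  have e2 : (108:ℝ)^m * 64^m = 27^m * 256^m := by rw [← mul_pow, ← mul_pow]; norm_num
  rw [e1]
  have key : (27:ℝ)^m * 27^m * (4*m).choose m ≤ 6*m*108^m * (3*m).centralBinom := by
    calc (27:ℝ)^m * 27^m * (4*m).choose m = 27^m * ((4*m).choose m * 27^m) := by ring
      _ ≤ 27^m * 256^m := by gcongr
      _ = 108^m * 64^m := e2.symm
      _ ≤ 108^m * (6*m*(3*m).centralBinom) := by gcongr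
      _ = _ := by ring
  calc _ = ((27:ℝ)^m * 27^m * (4*m).choose m) * (m ! * (3*m)! * (3*m)!) := by ring
    _ ≤ (6*m*108^m * (3*m).centralBinom) * (m ! * (3*m)! * (3*m)!) := by gcongr
    _ = _ := by ring

open Nat in
theorem pade (m : ℕ) (hm : 1 ≤ m) : ∃ A B : ℕ, 0 < B ∧ A^3 < 9*B^3 ∧
    (9*(B:ℝ)^3 - (A:ℝ)^3) * 1152^(4*m) ≤ (81/8) * m^2 * (9*(B:ℝ)^3) ∧
    (B:ℝ) ≤ 30*m^2 * 143825112^m := by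
  set n := 4*m with hn
  have hm0 : (1:ℝ) ≤ m := by exact_mod_cast hm
  set L : ℝ := (3:ℝ)^(6*m) * (4*m)! * (3*m)! / ((6*m)! * m !) with hL
  have hLpos : 0 < L := by positivity
  have hE : ∀ k l : ℕ, k + l = n → ∃ e : ℕ, (e:ℝ) = L * cc n k l := by
    intro k l hkl
    obtain ⟨e, he⟩ := integrality m k l hkl
    refine ⟨e, ?_⟩
    have he' : (3:ℝ)^(2*m) * (4*m)! * (3*m)! * UU (4*m) k * VV (4*m) l = ((6*m)! * m ! * k ! * l !) * e := by exact_mod_cast he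
    rw [hL, cc]
    have f := fun x => (Nat.cast_ne_zero (R := ℝ)).2 (Nat.factorial_ne_zero x)
    have f1 := f (6*m); have f2 := f m; have f3 := f k; have f4 := f l
    rw [show (3:ℝ)^(6*m) = 3^(2*m) * 3^n by rw [hn, ← pow_add]; congr 1; ring]
    rw [← hn] at he' ⊢
    field_simp
    linear_combination -he'
  choose! e he using hE
  have hn1 : ∀ k ∈ Finset.range (n+1), (8:ℝ)^n * (9/8)^k = 9^k * 8^(n-k) := by
    intro k hk
    have hk' : k ≤ n := by have := Finset.mem_range.1 hk; omega
    rw [show (8:ℝ)^n = 8^k * 8^(n-k) by rw [← pow_add]; congr 1; omega, div_pow]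
    field_simp
  have hB : ((∑ k ∈ Finset.range (n+1), e (n-k) k * (9^k*8^(n-k)) : ℕ):ℝ) = L * (8^n * (QQ n).eval (9/8)) := by
    rw [QQ_eval, Finset.mul_sum, Finset.mul_sum]
    push_cast
    apply Finset.sum_congr rfl
    intro k hk
    have hk' : k ≤ n := by have := Finset.mem_range.1 hk; omega
    rw [he (n-k) k (by omega), ← hn1 k hk]; ring
  have hA : ((2 * ∑ k ∈ Finset.range (n+1), e k (n-k) * (9^k*8^(n-k)) : ℕ):ℝ) = 2 * (L * (8^n * (PP n).eval (9/8))) := by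
    rw [PP_eval]
    push_cast
    congr 1
    rw [Finset.mul_sum, Finset.mul_sum]
    apply Finset.sum_congr rfl
    intro k hk
    have hk' : k ≤ n := by have := Finset.mem_range.1 hk; omega
    rw [he k (n-k) (by omega), ← hn1 k hk]; ring
  set B := ∑ k ∈ Finset.range (n+1), e (n-k) k * (9^k*8^(n-k)) with hBdef
  set A := 2 * ∑ k ∈ Finset.range (n+1), e k (n-k) * (9^k*8^(n-k)) with hAdef
  have hT : (0:ℝ) < ((2*n).choose n : ℝ) := by exact_mod_cast Nat.choose_pos (by omega)
  obtain ⟨b1, b2⟩ := pade_bound (PP n) (QQ n) m hm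
    (by
      rw [Nat.lt_succ_iff, Polynomial.natDegree_le_iff_coeff_eq_zero]
      intro N hN
      rw [QQ_coeff, if_neg (by omega)])
    (by intro k; rw [QQ_coeff]; split_ifs; exact cc_nonneg _ _ _; exact le_rfl)
    (by intro k; rw [PP_coeff]; split_ifs; exact cc_nonneg _ _ _; exact le_rfl)
    (by rw [QQ_coeff, if_pos (by omega)]; exact cc_pos _ _ _ (by omega))
    (by rw [PP_coeff, if_pos (by omega)]; exact cc_pos _ _ _ (by omega))
    (by rw [QQ_coeff, PP_coeff, if_pos (by omega), if_pos (by omega)]; exact cc_zero n)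
    (PP_rec n) (QQ_rec n) ((2*n).choose n : ℝ) hT (PP_one n) (by rw [QQ_one, PP_one])
  set q := (QQ n).eval (9/8) with hq
  set p := (PP n).eval (9/8) with hp
  have hqpos : 0 < q := by
    rw [hq, QQ_eval]
    apply Finset.sum_pos
    · intro k hk
      have hk' : k ≤ n := by have := Finset.mem_range.1 hk; omega
      have := cc_pos n (n-k) k hk'
      positivity
    · exact ⟨0, by simp⟩
  set S := L * 8^n with hS
  have hSpos : 0 < S := by positivity
  have hB' : (B:ℝ) = S * q := by rw [hB]; ring
  have hA' : (A:ℝ) = 2 * (S * p) := by rw [hA]; ring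
  refine ⟨A, B, ?_, ?_, ?_, ?_⟩
  · have : (0:ℝ) < B := by rw [hB']; positivity
    exact_mod_cast this
  · have : (A:ℝ)^3 < 9*(B:ℝ)^3 := by
      rw [hB', hA']
      have := mul_lt_mul_of_pos_left b1 (pow_pos hSpos 3)
      linarith
    exact_mod_cast this
  · rw [hB', hA']
    have hc : (16:ℝ)^n ≤ 64*m^2 * ((2*n).choose n : ℝ)^2 := by
      have h0 : 4^n ≤ 2*n * n.centralBinom := Nat.four_pow_le_two_mul_self_mul_centralBinom n (by omega)
      have h1 : (4:ℝ)^n ≤ 2*n * ((2*n).choose n : ℝ) := by exact_mod_cast h0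
      have h2 := pow_le_pow_left₀ (by positivity) h1 2
      rw [← pow_mul, mul_comm n 2, pow_mul] at h2
      have hnc : (n:ℝ) = 4*m := by rw [hn]; push_cast; ring
      rw [hnc] at h2
      norm_num at h2
      linarith
    have h1152 : (1152:ℝ)^n = 72^n * 16^n := by rw [← mul_pow]; norm_num
    rw [h1152]
    have hD : 0 < 9*q^3 - 8*p^3 := by linarith
    calc (9*(S*q)^3 - (2*(S*p))^3) * (72^n * 16^n) = S^3 * (9*q^3 - 8*p^3) * 72^n * 16^n := by ring
      _ ≤ S^3 * (9*q^3 - 8*p^3) * 72^n * (64*m^2 * ((2*n).choose n : ℝ)^2) := by gcongr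
      _ = S^3 * 64 * m^2 * ((9*q^3 - 8*p^3) * (72^n * ((2*n).choose n : ℝ)^2)) := by ring
      _ ≤ S^3 * 64 * m^2 * ((81/512) * (9 * q^3)) := by gcongr
      _ = _ := by ring
  · rw [hB]
    have h1 := lam_bound m hm
    have h2 := QQ_upper m
    have h3 : (0:ℝ) ≤ 8^n * q := by positivity
    calc L * (8^n * q) ≤ (6*m * 108^m) * ((4*m+1) * 1331714^m) := by gcongr
      _ = (24*m^2 + 6*m) * (108*1331714)^m := by rw [mul_pow]; ring
      _ ≤ 30*m^2 * 143825112^m := by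
        rw [show (108*1331714:ℝ) = 143825112 by norm_num]
        apply mul_le_mul_of_nonneg_right _ (by positivity)
        nlinarith


theorem eff_measure (X y z : ℕ) (h : y^3 = X^3 + 9*z^3) (hX : 0 < X)
    (hy : 3^51000 ≤ y) (hXy : X^3000 ≤ y) : False := by
  have hy1 : 1 ≤ y := le_trans (Nat.one_le_pow 51000 3 (by norm_num)) hy
  have hyR : (1:ℝ) ≤ y := by exact_mod_cast hy1
  have step : ∀ m : ℕ, 1 ≤ m → 608 * (m:ℝ)^4 * y ≤ 12245^m →
      (y:ℝ)^2 ≤ 60 * m^2 * 143825112^m * (X:ℝ)^3 := by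
    intro m hm hbd
    have hm0 : (1:ℝ) ≤ m := by exact_mod_cast hm
    obtain ⟨A, B, hB, hAB, hE, hBu⟩ := pade m hm
    have hlt : A*z < B*y := by
      have : (A*z)^3 < (B*y)^3 := by
        have h1 : (A*z)^3 ≤ 9*B^3 * z^3 := by
          rw [mul_pow]; exact Nat.mul_le_mul_right _ hAB.le
        have h2 : (B*y)^3 = 9*B^3*z^3 + B^3*X^3 := by rw [mul_pow, h]; ring
        have : 0 < B^3*X^3 := by positivity
        omega
      exact lt_of_pow_lt_pow_left₀ 3 (Nat.zero_le _) this
    have hlt' : (A:ℝ)*z + 1 ≤ B*y := by exact_mod_cast hlt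
    have hBR : (0:ℝ) < B := by exact_mod_cast hB
    have hA0 : (0:ℝ) ≤ (A:ℝ)*z := by positivity
    have hcub : ((B:ℝ)*y)^2 ≤ (B*y)^3 - (A*z)^3 := by
      set u := (B:ℝ)*y
      set v := (A:ℝ)*z
      have hu : 0 ≤ u := by positivity
      nlinarith [mul_nonneg (sub_nonneg.2 hlt') (sq_nonneg u), mul_nonneg hA0 hu, mul_nonneg (sub_nonneg.2 hlt') (mul_nonneg hA0 hu), mul_nonneg (sub_nonneg.2 hlt') (sq_nonneg v), sq_nonneg v]
    have hR : (y:ℝ)^3 = X^3 + 9*z^3 := by exact_mod_cast h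
    -- (By)^3 - (Az)^3 = B^3 X^3 + (9B^3-A^3) z^3
    have e1 : ((B:ℝ)*y)^3 - (A*z)^3 = B^3*X^3 + (9*B^3-A^3)*z^3 := by
      rw [mul_pow, hR]; ring
    rw [e1] at hcub
    have hz : 9*(z:ℝ)^3 ≤ y^3 := by
      rw [hR]; have : (0:ℝ) ≤ X^3 := by positivity
      linarith
    -- bound the second
    have h1152 : (1152:ℝ)^(4*m) ≥ 12245^m * 143825112^m := by
      rw [pow_mul, ← mul_pow]
      exact pow_le_pow_left₀ (by norm_num) (by norm_num) m
    have e2 : (9*(B:ℝ)^3-A^3)*z^3 * 1152^(4*m) ≤ (81/8)*m^2*B^3*y^3 := by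
      calc (9*(B:ℝ)^3-A^3)*z^3 * 1152^(4*m) = ((9*(B:ℝ)^3-A^3) * 1152^(4*m)) * z^3 := by ring
        _ ≤ ((81/8) * m^2 * (9*(B:ℝ)^3)) * z^3 := by gcongr
        _ = (81/8)*m^2*B^3*(9*z^3) := by ring
        _ ≤ _ := by gcongr
    have e3 : (9*(B:ℝ)^3-A^3)*z^3 ≤ (1/2) * (B*y)^2 := by
      have hpos : (0:ℝ) < 1152^(4*m) := by positivity
      rw [← mul_le_mul_iff_of_pos_right hpos]
      refine e2.trans ?_
      calc (81/8)*(m:ℝ)^2*B^3*y^3 = (81/8)*(m:ℝ)^2*(B:ℝ)*(y:ℝ)*((B:ℝ)*(y:ℝ))^2 := by ring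
        _ ≤ (81/8)*(m:ℝ)^2*(30*(m:ℝ)^2 * 143825112^m)*(y:ℝ)*((B:ℝ)*(y:ℝ))^2 := by gcongr
        _ = (1/2) * ((B:ℝ)*(y:ℝ))^2 * (((1215/2) * (m:ℝ)^4 * y) * 143825112^m) := by ring
        _ ≤ (1/2) * ((B:ℝ)*(y:ℝ))^2 * ((608 * (m:ℝ)^4 * y) * 143825112^m) := by gcongr; norm_num
        _ ≤ (1/2) * ((B:ℝ)*(y:ℝ))^2 * (12245^m * 143825112^m) := by gcongr
        _ ≤ (1/2) * ((B:ℝ)*(y:ℝ))^2 * 1152^(4*m) := by gcongr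
    have e4 : ((B:ℝ)*y)^2 ≤ 2*B^3*X^3 := by linarith
    have e5 : (B:ℝ)^2 * y^2 ≤ B^2 * (2*B*X^3) := by linarith [e4, show ((B:ℝ)*y)^2 = B^2*y^2 by ring, show (2:ℝ)*B^3*X^3 = B^2 * (2*B*X^3) by ring]
    have e6 := le_of_mul_le_mul_left e5 (by positivity)
    calc (y:ℝ)^2 ≤ 2*B*X^3 := e6
      _ ≤ 2*(30*m^2 * 143825112^m)*X^3 := by gcongr
      _ = _ := by ring
  -- growth
  have hgrow : ∀ m : ℕ, 4000 ≤ m → (3340000000000000:ℝ) * m^10 ≤ (10327/10000)^m := by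
    intro m hm
    induction m, hm using Nat.le_induction with
    | base =>
      have h1 : (36/10:ℝ) ≤ (10327/10000)^40 := by norm_num
      have h2 : (36/10:ℝ)^100 ≤ ((10327/10000)^40)^100 := pow_le_pow_left₀ (by norm_num) h1 100
      rw [← pow_mul] at h2
      refine le_trans ?_ h2
      norm_num
    | succ m hm ih =>
      have hm0 : (4000:ℝ) ≤ m := by exact_mod_cast hm
      have h1 : ((m:ℝ)+1)^10 ≤ (10327/10000) * m^10 := by
        have : (m:ℝ)+1 ≤ (4001/4000)*m := by linarith
        calc ((m:ℝ)+1)^10 ≤ ((4001/4000)*(m:ℝ))^10 := by gcongr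
          _ = (4001/4000)^10 * (m:ℝ)^10 := by rw [mul_pow]
          _ ≤ _ := by gcongr; norm_num
      push_cast
      rw [pow_succ (10327/10000 : ℝ) m]
      calc (3340000000000000:ℝ) * ((m:ℝ)+1)^10 ≤ 3340000000000000 * ((10327/10000) * (m:ℝ)^10) := by gcongr
        _ = (3340000000000000 * (m:ℝ)^10) * (10327/10000) := by ring
        _ ≤ _ := by gcongr
  -- choose m
  have hex : ∃ m : ℕ, 4000 ≤ m ∧ 608 * (m:ℝ)^4 * y ≤ 12245^m := by
    refine ⟨y + 4000, by omega, ?_⟩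
    have h1 := hgrow (y+4000) (by omega)
    have h2 : (10327/10000:ℝ)^(y+4000) ≤ 12245^(y+4000) := pow_le_pow_left₀ (by norm_num) (by norm_num) _
    refine le_trans ?_ (h1.trans h2)
    set M := y + 4000 with hM
    have hM1 : (1:ℝ) ≤ M := by exact_mod_cast (show 1 ≤ M by omega)
    have hyM : (y:ℝ) ≤ M := by exact_mod_cast (show y ≤ M by omega)
    calc 608 * (M:ℝ)^4 * y ≤ 608 * (M:ℝ)^4 * M := by gcongr
      _ = 608 * (M:ℝ)^5 := by ring
      _ ≤ 608 * (M:ℝ)^10 := by gcongr <;> first | exact hM1 | norm_num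
      _ ≤ _ := by gcongr; norm_num
  classical
  set m := Nat.find hex with hmdef
  obtain ⟨hm4, hmb⟩ := Nat.find_spec hex
  rw [← hmdef] at hm4 hmb
  have hyU : (y:ℝ) ≤ 12245^m := by
    have hm1 : (1:ℝ) ≤ m := by exact_mod_cast (show 1 ≤ m by omega)
    have : (1:ℝ) ≤ 608 * (m:ℝ)^4 := by nlinarith [one_le_pow₀ (n := 4) hm1]
    calc (y:ℝ) = 1 * y := by ring
      _ ≤ _ := by gcongr
      _ ≤ _ := hmb
  have hm5 : 4001 ≤ m := by
    by_contra hcon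
    have : m = 4000 := by omega
    rw [this] at hyU
    have h1 : y ≤ 12245^4000 := by exact_mod_cast hyU
    have h2 : 12245^4000 < 3^51000 := by
      calc 12245^4000 < (3^9)^4000 := Nat.pow_lt_pow_left (by norm_num) (by norm_num)
        _ = 3^36000 := by rw [← pow_mul]
        _ ≤ 3^51000 := Nat.pow_le_pow_right (by norm_num) (by norm_num)
    exact absurd (hy.trans h1) (not_le.2 h2)
  have hlow : (12245:ℝ)^m ≤ 608 * 12245 * m^4 * y := by
    have := Nat.find_min hex (m := m - 1) (by omega)
    push Not at this
    have h1 := this (by omega)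
    have h2 : ((m-1:ℕ):ℝ) ≤ m := by exact_mod_cast Nat.sub_le m 1
    have e : (12245:ℝ)^m = 12245^(m-1) * 12245 := by rw [← pow_succ]; congr 1; omega
    rw [e]
    calc (12245:ℝ)^(m-1) * 12245 ≤ (608 * ((m-1:ℕ):ℝ)^4 * y) * 12245 := by gcongr
      _ ≤ (608 * (m:ℝ)^4 * y) * 12245 := by gcongr
      _ = _ := by ring
  have hX3 : (X:ℝ)^3 ≤ (10095/10000)^m := by
    apply le_of_pow_le_pow_left₀ (n := 1000) (by norm_num) (by positivity)
    rw [← pow_mul, ← pow_mul, mul_comm m 1000, pow_mul _ 1000 m]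
    have h1 : (X:ℝ)^(3*1000) ≤ y := by exact_mod_cast hXy
    refine (h1.trans hyU).trans ?_
    apply pow_le_pow_left₀ (by norm_num)
    have a1 : (1603/1000:ℝ) ≤ (10095/10000)^50 := by norm_num
    have a2 : (1603/1000:ℝ)^20 ≤ ((10095/10000)^50)^20 := pow_le_pow_left₀ (by norm_num) a1 20
    rw [← pow_mul] at a2
    refine le_trans ?_ a2
    norm_num
  have hs := step m (by omega) hmb
  have hg := hgrow m hm4
  have hm1 : (1:ℝ) ≤ m := by exact_mod_cast (show 1 ≤ m by omega)
  -- combine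
  have c1 : ((12245:ℝ)^m)^2 ≤ (608 * 12245 * (m:ℝ)^4)^2 * (60 * (m:ℝ)^2 * 143825112^m * (10095/10000)^m) := by
    calc ((12245:ℝ)^m)^2 ≤ (608 * 12245 * (m:ℝ)^4 * (y:ℝ))^2 := by gcongr
      _ = (608 * 12245 * (m:ℝ)^4)^2 * (y:ℝ)^2 := by ring
      _ ≤ (608 * 12245 * (m:ℝ)^4)^2 * (60 * (m:ℝ)^2 * 143825112^m * (X:ℝ)^3) := by gcongr
      _ ≤ _ := by gcongr
  have c2 : (608 * 12245 * (m:ℝ)^4)^2 * (60 * m^2 * 143825112^m * (10095/10000)^m) < (3340000000000000 * m^10) * (143825112^m * (10095/10000)^m) := by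
    have : (608 * 12245 * (m:ℝ)^4)^2 * (60 * m^2 * 143825112^m * (10095/10000)^m) = ((608*12245)^2*60) * (m^10 * (143825112^m * (10095/10000)^m)) := by ring
    rw [this, mul_assoc 3340000000000000]
    apply mul_lt_mul_of_pos_right (by norm_num) (by positivity)
  have c3 : (3340000000000000 * (m:ℝ)^10) * (143825112^m * (10095/10000)^m) ≤ (12245^m)^2 := by
    calc (3340000000000000 * (m:ℝ)^10) * (143825112^m * (10095/10000)^m) ≤ (10327/10000)^m * (143825112^m * (10095/10000)^m) := by gcongr
      _ = ((10327/10000) * (143825112 * (10095/10000)))^m := by rw [mul_pow, mul_pow]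
      _ ≤ (12245^2)^m := by
        apply pow_le_pow_left₀ (by norm_num) (by norm_num)
      _ = _ := by rw [← pow_mul, ← pow_mul, mul_comm]
  linarith

section EisensteinPart
open scoped QuadraticAlgebra

abbrev EI := QuadraticAlgebra ℤ (-1) (-1)

lemma EI_norm (z : EI) : z.norm = z.re^2 - z.re*z.im + z.im^2 := by
  rw [QuadraticAlgebra.norm_def]; ring

lemma EI_norm_nonneg (z : EI) : 0 ≤ z.norm := by
  rw [EI_norm]; nlinarith [sq_nonneg (2*z.re - z.im), sq_nonneg z.im]

lemma EI_norm_pos (z : EI) (hz : z ≠ 0) : 0 < z.norm := by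
  rcases (EI_norm_nonneg z).lt_or_eq with h | h
  · exact h
  · exfalso
    apply hz
    rw [EI_norm] at h
    have h2 : z.im = 0 := by
      by_contra hne
      have : 0 < z.im^2 := by positivity
      nlinarith [sq_nonneg (2*z.re - z.im)]
    have h1 : z.re = 0 := by
      rw [h2] at h
      have : z.re^2 = 0 := by linarith
      exact pow_eq_zero_iff (two_ne_zero) |>.1 this
    exact QuadraticAlgebra.ext h1 h2

lemma round_ex (u n : ℤ) (hn : 0 < n) : ∃ a, 2*(u - n*a) ≤ n ∧ -n ≤ 2*(u-n*a) := by
  refine ⟨(2*u+n)/(2*n), ?_⟩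
  have h1 := Int.emod_add_mul_ediv (2*u+n) (2*n)
  have h2 := Int.emod_nonneg (2*u+n) (show 2*n ≠ 0 by omega)
  have h3 := Int.emod_lt_of_pos (2*u+n) (show 0 < 2*n by omega)
  have h4 : 2*n*((2*u+n)/(2*n)) = 2*(n*((2*u+n)/(2*n))) := by ring
  constructor <;> linarith

lemma EI_div (x y : EI) (hy : y ≠ 0) : ∃ q : EI, (x - y*q).norm < y.norm := by
  have hn := EI_norm_pos y hy
  obtain ⟨a, ha1, ha2⟩ := round_ex (x * star y).re y.norm hn
  obtain ⟨b, hb1, hb2⟩ := round_ex (x * star y).im y.norm hn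
  refine ⟨⟨a, b⟩, ?_⟩
  have key : (x - y*⟨a,b⟩).norm * y.norm
      = ((x * star y).re - y.norm*a)^2 - ((x * star y).re - y.norm*a)*((x * star y).im - y.norm*b) + ((x * star y).im - y.norm*b)^2 := by
    simp [EI_norm]
    ring
  set e := (x * star y).re - y.norm*a
  set f := (x * star y).im - y.norm*b
  set n := y.norm
  have : (x - y*⟨a,b⟩).norm * n < n * n := by
    rw [key]
    nlinarith
  exact lt_of_mul_lt_mul_right this hn.le

instance EI_nontrivial : Nontrivial EI := ⟨0, 1, fun h => by
  have := congrArg QuadraticAlgebra.re h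
  simp at this⟩

open Classical in
@[reducible]
noncomputable def EI_euc : EuclideanDomain EI :=
  { (inferInstance : CommRing EI), EI_nontrivial with
    quotient := fun x y => if h : y = 0 then 0 else (EI_div x y h).choose
    remainder := fun x y => x - y * (if h : y = 0 then 0 else (EI_div x y h).choose)
    quotient_zero := fun x => by simp
    quotient_mul_add_remainder_eq := fun x y => by ring
    r := fun x y => x.norm.natAbs < y.norm.natAbs
    r_wellFounded := (measure (fun z : EI => z.norm.natAbs)).wf
    remainder_lt := fun x y hy => by
      have := (EI_div x y hy).choose_spec
      rw [dif_neg hy]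
      have h1 := EI_norm_nonneg (x - y * (EI_div x y hy).choose)
      omega
    mul_left_not_lt := fun x y hy => by
      have h1 := EI_norm_pos y hy
      have h2 := EI_norm_nonneg x
      rw [map_mul, Int.natAbs_mul]
      have : 1 ≤ y.norm.natAbs := by omega
      simpa using Nat.le_mul_of_pos_right _ this }

lemma EI_cube (a b c : EI) (hab : IsCoprime a b) (h : a*b = c^3) : ∃ d : EI, Associated (d^3) a := by
  have h1 : IsDomain EI := @EuclideanDomain.instIsDomain EI EI_euc
  have h2 : IsPrincipalIdealRing EI := @EuclideanDomain.to_principal_ideal_domain EI EI_euc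
  exact exists_associated_pow_of_mul_eq_pow' hab h

lemma EI_unit (z : EI) (h : IsUnit z) : z = ⟨1,0⟩ ∨ z = ⟨-1,0⟩ ∨ z = ⟨0,1⟩ ∨ z = ⟨0,-1⟩ ∨ z = ⟨1,1⟩ ∨ z = ⟨-1,-1⟩ := by
  rw [QuadraticAlgebra.isUnit_iff_norm_isUnit, Int.isUnit_iff] at h
  have h0 := EI_norm_nonneg z
  have h1 : z.norm = 1 := by omega
  rw [EI_norm] at h1
  obtain ⟨p, q⟩ := z
  simp only at h1
  have a1 : p ≤ 1 := by nlinarith [sq_nonneg (2*q-p)]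
  have a2 : -1 ≤ p := by nlinarith [sq_nonneg (2*q-p)]
  have b1 : q ≤ 1 := by nlinarith [sq_nonneg (2*p-q)]
  have b2 : -1 ≤ q := by nlinarith [sq_nonneg (2*p-q)]
  interval_cases p <;> interval_cases q <;> simp_all

/-- cube representation -/
lemma EI_rep (m n v : ℤ) (hmn : IsCoprime m n) (h : m^2 - m*n + n^2 = v^3) (h3 : ¬ (3:ℤ) ∣ v) :
    ∃ p q : ℤ, IsCoprime p q ∧ p^2 - p*q + q^2 = v ∧
      (m - n = 3*p*q*(p-q) ∨ m - n = -(3*p*q*(p-q)) ∨ ∃ k, m - n = (p+q) + 3*k ∨ m - n = -(p+q) + 3*k) := by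
  obtain ⟨s, t, hst⟩ := hmn
  have hcop3 : IsCoprime (v^3) (3:ℤ) := by
    apply IsCoprime.pow_left
    exact ((Int.prime_three.coprime_iff_not_dvd).2 h3).symm
  obtain ⟨e, f, hef⟩ := hcop3
  have hc : IsCoprime (⟨m,n⟩ : EI) (star ⟨m,n⟩) := by
    -- 3 = combination
    have c1 : (⟨m,n⟩ : EI) * star ⟨m,n⟩ = ⟨v^3, 0⟩ := by
      ext <;> simp <;> linarith
    have c2 : ∃ A B : EI, A * ⟨m,n⟩ + B * star ⟨m,n⟩ = ⟨3, 0⟩ := by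
      -- 3m = (2m-n)+(m+n), 3n = 2(m+n)-(2m-n)
      refine ⟨⟨s,0⟩*(1 - ⟨0,1⟩) + ⟨t,0⟩*(-⟨0,2⟩ - 1), ⟨s,0⟩*(1 - star ⟨0,1⟩) + ⟨t,0⟩*(-star ⟨0,2⟩ - 1), ?_⟩
      ext <;> simp <;> linarith
    obtain ⟨A, B, hAB⟩ := c2
    refine ⟨⟨f,0⟩*A, ⟨e,0⟩*⟨m,n⟩ + ⟨f,0⟩*B, ?_⟩
    calc ⟨f,0⟩*A * ⟨m,n⟩ + (⟨e,0⟩*⟨m,n⟩ + ⟨f,0⟩*B)*star ⟨m,n⟩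
        = ⟨f,0⟩ * (A * ⟨m,n⟩ + B * star ⟨m,n⟩) + ⟨e,0⟩*((⟨m,n⟩:EI) * star ⟨m,n⟩) := by ring
      _ = 1 := by rw [hAB, c1]; ext <;> simp; linarith
  have hprod : (⟨m,n⟩ : EI) * star ⟨m,n⟩ = (⟨v,0⟩ : EI)^3 := by
    ext <;> simp [pow_succ] <;> linarith
  obtain ⟨⟨p, q⟩, u, hu⟩ := EI_cube _ _ _ hc hprod
  have hu2 := EI_unit u u.isUnit
  have hN : p^2-p*q+q^2 = v := by
    have h1 : (u:EI).norm = 1 := by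
      rcases hu2 with h | h | h | h | h | h <;> rw [h] <;> simp [EI_norm]
    have h2 := congrArg QuadraticAlgebra.norm hu
    rw [map_mul, map_pow, h1, EI_norm, EI_norm] at h2
    simp only at h2
    have h4 : (p^2-p*q+q^2)^3 = v^3 := by linarith
    exact (Odd.strictMono_pow (by decide : Odd 3)).injective h4
  have hcube : (⟨p,q⟩ : EI)^3 = ⟨p^3+q^3-3*p*q^2, 3*p*q*(p-q)⟩ := by
    ext <;> simp [pow_succ] <;> ring
  rw [hcube] at hu
  refine ⟨p, q, ?_, hN, ?_⟩
  · rw [Int.isCoprime_iff_gcd_eq_one]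
    by_contra hg
    obtain ⟨r, hr, hrd⟩ := Nat.exists_prime_and_dvd hg
    have hp : (r:ℤ) ∣ p := (Int.natCast_dvd_natCast.2 hrd).trans (Int.gcd_dvd_left ..)
    have hq : (r:ℤ) ∣ q := (Int.natCast_dvd_natCast.2 hrd).trans (Int.gcd_dvd_right ..)
    obtain ⟨p', rfl⟩ := hp
    obtain ⟨q', rfl⟩ := hq
    have k : (r:ℤ) ∣ m ∧ (r:ℤ) ∣ n := by
      have e1 := congrArg QuadraticAlgebra.re hu
      have e2 := congrArg QuadraticAlgebra.im hu
      simp at e1 e2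
      constructor
      · rw [← e1]
        refine ⟨((r*p')^2*p'+(r*q')^2*q'-3*p'*(r*q')^2) * (u:EI).re - (3*p'*(r*q')*(r*p'-r*q'))* (u:EI).im, by ring⟩
      · rw [← e2]
        refine ⟨((r*p')^2*p'+(r*q')^2*q'-3*p'*(r*q')^2) * (u:EI).im + (3*p'*(r*q')*(r*p'-r*q'))* (u:EI).re - (3*p'*(r*q')*(r*p'-r*q'))* (u:EI).im, by ring⟩
    have : (r:ℤ) ∣ 1 := by
      rw [← hst]; exact dvd_add (k.1.mul_left _) (k.2.mul_left _)
    have := Int.natAbs_dvd_natAbs.2 this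
    simp at this
    exact hr.one_lt.ne' this
  · obtain ⟨k, hk⟩ : ∃ k, p^3+q^3 = p+q+3*k := by
      have h1 : ∀ x : ℤ, ∃ k, x^3 = x+3*k := by
        intro x
        obtain ⟨j, hj | hj | hj⟩ : ∃ j, x = 3*j ∨ x = 3*j+1 ∨ x = 3*j+2 := ⟨x/3, by omega⟩
        · exact ⟨9*j^3 - j, by rw [hj]; ring⟩
        · exact ⟨9*j^3+9*j^2+2*j, by rw [hj]; ring⟩
        · exact ⟨9*j^3+18*j^2+11*j+2, by rw [hj]; ring⟩
      obtain ⟨k1, h1'⟩ := h1 p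
      obtain ⟨k2, h2'⟩ := h1 q
      exact ⟨k1+k2, by linarith⟩
    have e1 := congrArg QuadraticAlgebra.re hu
    have e2 := congrArg QuadraticAlgebra.im hu
    rcases hu2 with h | h | h | h | h | h <;> rw [h] at e1 e2 <;> simp at e1 e2
    · right; right
      exact ⟨k - p*q^2 - p*q*(p-q), Or.inl (by linear_combination hk - e1 + e2)⟩
    · right; right
      exact ⟨-(k - p*q^2 - p*q*(p-q)), Or.inr (by linear_combination -hk - e1 + e2)⟩
    · right; right
      exact ⟨-(k - p*q^2), Or.inr (by linear_combination -hk - e1 + e2)⟩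
    · right; right
      exact ⟨(k - p*q^2), Or.inl (by linear_combination hk - e1 + e2)⟩
    · right; left; linear_combination e2 - e1
    · left; linear_combination e2 - e1

end EisensteinPart

lemma cop_of_prime (a b : ℤ) (h : ∀ r : ℕ, r.Prime → (r:ℤ) ∣ a → (r:ℤ) ∣ b → False) : IsCoprime a b := by
  rw [Int.isCoprime_iff_gcd_eq_one]
  by_contra hg
  obtain ⟨r, hr, hrd⟩ := Nat.exists_prime_and_dvd hg
  exact h r hr ((Int.natCast_dvd_natCast.2 hrd).trans (Int.gcd_dvd_left ..)) ((Int.natCast_dvd_natCast.2 hrd).trans (Int.gcd_dvd_right ..))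

lemma not_three_of_cop {a b : ℤ} (h : IsCoprime a b) (ha : (3:ℤ) ∣ a) : ¬ (3:ℤ) ∣ b := by
  intro hb
  obtain ⟨s, t, hst⟩ := h
  have : (3:ℤ) ∣ 1 := by rw [← hst]; exact dvd_add (ha.mul_left _) (hb.mul_left _)
  omega

lemma tri (P Q R h : ℤ) (k : ℕ) (hs : P + Q + R = 0) (hc : IsCoprime Q R) (h3 : (3:ℤ) ∣ P)
    (hp : P*Q*R = 9*h^3) (hk : 3^k ∣ h) (hh : h ≠ 0) :
    ∃ r s t : ℤ, IsCoprime r s ∧ r^3+s^3 = 9*t^3 ∧ t ≠ 0 ∧ 3^k ∣ t ∧ Q = -r^3 ∧ R = -s^3 := by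
  have hPQ : IsCoprime P Q := by
    have : P = -R + (-1)*Q := by linarith
    rw [this]; exact IsCoprime.add_mul_left_left hc.symm.neg_left (-1) |>.symm.symm |> fun h => by simpa [mul_comm] using h
  have hPR : IsCoprime P R := by
    have : P = -Q + (-1)*R := by linarith
    rw [this]; exact IsCoprime.add_mul_left_left hc.neg_left (-1) |> fun h => by simpa [mul_comm] using h
  have hQ3 := not_three_of_cop hPQ h3
  have hR3 := not_three_of_cop hPR h3
  have c3Q : IsCoprime (3:ℤ) Q := (Int.prime_three.coprime_iff_not_dvd).2 hQ3
  have c3R : IsCoprime (3:ℤ) R := (Int.prime_three.coprime_iff_not_dvd).2 hR3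
  have h9 : (3:ℤ)^2 ∣ P := by
    have h1 : (3:ℤ)^2 ∣ P*(Q*R) := ⟨h^3, by linarith⟩
    exact (IsCoprime.pow_left (c3Q.mul_right c3R)).dvd_of_dvd_mul_right h1
  obtain ⟨P', rfl⟩ := h9
  have e : P' * (Q*R) = h^3 := by nlinarith
  have cP'Q : IsCoprime P' Q := hPQ.of_mul_left_right
  have cP'R : IsCoprime P' R := hPR.of_mul_left_right
  obtain ⟨⟨t, ht⟩, ⟨w, hw⟩⟩ := Int.eq_pow_of_mul_eq_pow_odd (cP'Q.mul_right cP'R) (by decide : Odd 3) e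
  obtain ⟨⟨r, hr⟩, ⟨s, hs'⟩⟩ := Int.eq_pow_of_mul_eq_pow_odd hc (by decide : Odd 3) hw
  have hts : t^3*(r^3*s^3) = h^3 := by rw [← ht, ← hr, ← hs', e]
  have hts' : t*(r*s) = h := by
    have : (t*(r*s))^3 = h^3 := by rw [← hts]; ring
    exact (Odd.strictMono_pow (by decide : Odd 3)).injective this
  have c3r : IsCoprime (3:ℤ) r := by rw [hr] at c3Q; exact c3Q.of_isCoprime_of_dvd_right (dvd_pow_self r (by norm_num))
  have c3s : IsCoprime (3:ℤ) s := by rw [hs'] at c3R; exact c3R.of_isCoprime_of_dvd_right (dvd_pow_self s (by norm_num))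
  refine ⟨-r, -s, t, ?_, ?_, ?_, ?_, ?_, ?_⟩
  · rw [IsCoprime.neg_neg_iff]
    rw [hr, hs'] at hc
    exact (hc.of_isCoprime_of_dvd_left (dvd_pow_self r (by norm_num))).of_isCoprime_of_dvd_right (dvd_pow_self s (by norm_num))
  · rw [ht, hr, hs'] at hs; linarith
  · rintro rfl; apply hh; rw [← hts']; ring
  · rw [← hts'] at hk
    exact (IsCoprime.pow_left (c3r.mul_right c3s)).dvd_of_dvd_mul_right hk
  · rw [hr]; ring
  · rw [hs']; ring

theorem descent_step (k : ℕ) (x y t : ℤ) (hxy : IsCoprime x y) (h : x^3+y^3 = 9*t^3) (ht : t ≠ 0) (hk : 3^(k+1) ∣ t) :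
    ∃ r s t' : ℤ, IsCoprime r s ∧ r^3+s^3 = 9*t'^3 ∧ t' ≠ 0 ∧ 3^k ∣ t' ∧
      x^2 - x*y + y^2 = 3*(r^6+r^3*s^3+s^6)^3 := by
  obtain ⟨sg, hsg⟩ : ∃ s, x + y = 3*s := by
    have h1 : ∀ x : ℤ, ∃ k, x^3 = x+3*k := by
      intro x
      obtain ⟨j, hj | hj | hj⟩ : ∃ j, x = 3*j ∨ x = 3*j+1 ∨ x = 3*j+2 := ⟨x/3, by omega⟩
      · exact ⟨9*j^3 - j, by rw [hj]; ring⟩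
      · exact ⟨9*j^3+9*j^2+2*j, by rw [hj]; ring⟩
      · exact ⟨9*j^3+18*j^2+11*j+2, by rw [hj]; ring⟩
    obtain ⟨a, ha⟩ := h1 x
    obtain ⟨b, hb⟩ := h1 y
    exact ⟨3*t^3 - a - b, by linarith⟩
  obtain ⟨m, n, rfl, rfl⟩ : ∃ m n, x = m - 2*n ∧ y = 2*m - n := ⟨y - sg, y - 2*sg, by linarith, by linarith⟩
  have hmn : IsCoprime m n := by
    obtain ⟨a, b, hab⟩ := hxy
    exact ⟨a+2*b, -2*a-b, by linarith⟩
  have h3t : (3:ℤ) ∣ t := (dvd_pow_self 3 (Nat.succ_ne_zero k)).trans hk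
  have hprod : (m-n)*(m^2-m*n+n^2) = t^3 := by nlinarith
  have h27 : (27:ℤ) ∣ (m-n)*(m^2-m*n+n^2) := by
    rw [hprod]; obtain ⟨c, rfl⟩ := h3t; exact ⟨c^3, by ring⟩
  have p3 := Int.prime_three
  have hN3 : ¬ (3:ℤ) ∣ m^2-m*n+n^2 := by
    intro hd
    have hs : (3:ℤ) ∣ m+n := by
      apply p3.dvd_of_dvd_pow (n := 2)
      obtain ⟨c, hc⟩ := hd
      exact ⟨c + m*n, by linarith⟩
    have hn : ¬ (3:ℤ) ∣ n := by
      intro hn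
      have hm : (3:ℤ) ∣ m := by omega
      exact not_three_of_cop hmn hm hn
    have hd : ¬ (3:ℤ) ∣ m - n := by omega
    have hc : IsCoprime (3:ℤ) (m-n) := (p3.coprime_iff_not_dvd).2 hd
    have h9 : (3:ℤ)^3 ∣ m^2-m*n+n^2 := (IsCoprime.pow_left hc).dvd_of_dvd_mul_left (by simpa using h27)
    obtain ⟨c, hc⟩ := h9
    obtain ⟨d, hd⟩ := hs
    have hm : m = 3*d - n := by linarith
    subst hm
    have : n^2 = 3*(3*c - d^2*1 - 0) + 3*(d*n) + 0 - 0 * n := by nlinarith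
    have : (3:ℤ) ∣ n^2 := ⟨3*c - d^2 + d*n, by linarith⟩
    exact hn (p3.dvd_of_dvd_pow this)
  have hcop : IsCoprime (m-n) (m^2-m*n+n^2) := by
    have e : m^2-m*n+n^2 = m*n + (m-n)*(m-n) := by ring
    rw [e]
    apply IsCoprime.add_mul_left_right
    obtain ⟨a, b, hab⟩ := hmn
    apply IsCoprime.mul_right
    · exact ⟨-b, a+b, by linarith⟩
    · exact ⟨a, a+b, by linarith⟩
  obtain ⟨⟨g, hg⟩, ⟨v, hv⟩⟩ := Int.eq_pow_of_mul_eq_pow_odd hcop (by decide : Odd 3) hprod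
  have hgv : g*v = t := by
    have : (g*v)^3 = t^3 := by rw [← hprod, hg, hv]; ring
    exact (Odd.strictMono_pow (by decide : Odd 3)).injective this
  have hv3 : ¬ (3:ℤ) ∣ v := by
    intro hd; apply hN3; rw [hv]; exact dvd_pow hd (by norm_num)
  have c3v : IsCoprime (3:ℤ) v := (p3.coprime_iff_not_dvd).2 hv3
  have hkg : (3:ℤ)^(k+1) ∣ g := by
    rw [← hgv] at hk
    exact (IsCoprime.pow_left c3v).dvd_of_dvd_mul_right hk
  obtain ⟨h0, hh0⟩ : (3:ℤ) ∣ g := (dvd_pow_self 3 (Nat.succ_ne_zero k)).trans hkg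
  have hkh : (3:ℤ)^k ∣ h0 := by
    rw [hh0, pow_succ, mul_comm] at hkg
    exact Int.dvd_of_mul_dvd_mul_left (by norm_num) hkg
  have hh00 : h0 ≠ 0 := by
    rintro rfl; apply ht; rw [← hgv, hh0]; ring
  obtain ⟨p, q, hpq, hN, hcase⟩ := EI_rep m n v hmn hv hv3
  have hpqs : ¬ (3:ℤ) ∣ p + q := by
    intro hd
    apply hv3
    obtain ⟨c, hc⟩ := hd
    have : p = 3*c - q := by linarith
    subst this
    exact ⟨3*c^2 - 3*c*q + q^2, by rw [← hN]; ring⟩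
  have h3mn : (3:ℤ) ∣ m - n := by rw [hg, hh0]; exact ⟨9*h0^3, by ring⟩
  have hcase' : ∃ h1 : ℤ, h1 ≠ 0 ∧ (3:ℤ)^k ∣ h1 ∧ p*q*(p-q) = 9*h1^3 := by
    rcases hcase with hc | hc | ⟨j, hc | hc⟩
    · refine ⟨h0, hh00, hkh, ?_⟩
      rw [hg, hh0] at hc; linarith
    · refine ⟨-h0, neg_ne_zero.2 hh00, (dvd_neg).2 hkh, ?_⟩
      rw [hg, hh0] at hc
      have : (-h0)^3 = -h0^3 := by ring
      rw [this]; linarith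
    · exfalso; omega
    · exfalso; omega
  obtain ⟨h1, h1ne, h1k, h1e⟩ := hcase'
  have hN' : (m-2*n)^2 - (m-2*n)*(2*m-n) + (2*m-n)^2 = 3*v^3 := by rw [← hv]; ring
  have fin : ∀ P Q R : ℤ, P + Q + R = 0 → IsCoprime Q R → (3:ℤ) ∣ P → P*Q*R = 9*(-h1)^3 → Q^2+Q*R+R^2 = v →
     ∃ r s t' : ℤ, IsCoprime r s ∧ r^3+s^3 = 9*t'^3 ∧ t' ≠ 0 ∧ 3^k ∣ t' ∧
      (m-2*n)^2 - (m-2*n)*(2*m-n) + (2*m-n)^2 = 3*(r^6+r^3*s^3+s^6)^3 := by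
    intro P Q R a1 a2 a3 a4 a5
    obtain ⟨r, s, t', b1, b2, b3, b4, b5, b6⟩ := tri P Q R (-h1) k a1 a2 a3 a4 ((dvd_neg).2 h1k) (neg_ne_zero.2 h1ne)
    refine ⟨r, s, t', b1, b2, b3, b4, ?_⟩
    rw [hN', ← a5, b5, b6]; ring
  have h3pq : (3:ℤ) ∣ p*q*(p-q) := by rw [h1e]; exact ⟨3*h1^3, by ring⟩
  have cop2 : IsCoprime q (p-q) := by
    obtain ⟨a, b, hab⟩ := hpq; exact ⟨a+b, a, by linarith⟩
  have cop3 : IsCoprime p (p-q) := by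
    obtain ⟨a, b, hab⟩ := hpq; exact ⟨a+b, -b, by linarith⟩
  -- triple (-p, q, p-q): product = -p q (p-q)
  rcases p3.dvd_or_dvd h3pq with hd | hd
  · rcases p3.dvd_or_dvd hd with hd | hd
    · exact fin (-p) q (p-q) (by ring) cop2 ((dvd_neg).2 hd) (by linear_combination -h1e) (by rw [← hN]; ring)
    · exact fin q (-p) (p-q) (by ring) cop3.neg_left hd (by linear_combination -h1e) (by rw [← hN]; ring)
  · exact fin (p-q) (-p) q (by ring) hpq.neg_left hd (by linear_combination -h1e) (by rw [← hN]; ring)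

theorem descent (b : ℕ) : ∀ (x y t : ℤ), IsCoprime x y → x^3+y^3 = 9*t^3 → t ≠ 0 → 3^b ∣ t →
    (2:ℤ)^(8^b) ≤ max |x| |y| := by
  induction b with
  | zero =>
    intro x y t hc h ht _
    by_contra hcon
    push Not at hcon
    simp only [pow_zero, pow_one, max_lt_iff, abs_lt] at hcon
    obtain ⟨⟨a1, a2⟩, b1, b2⟩ := hcon
    have : t^3 ≠ 0 := pow_ne_zero 3 ht
    interval_cases x <;> interval_cases y <;> omega
  | succ k ih =>
    intro x y t hc h ht hk
    obtain ⟨r, s, t', b1, b2, b3, b4, b5⟩ := descent_step k x y t hc h ht hk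
    have hM := ih r s t' b1 b2 b3 b4
    set M' := max |r| |s| with hM'
    set M := max |x| |y| with hMd
    have hM2 : 2 ≤ M' := le_trans (by
      calc (2:ℤ) = 2^1 := by norm_num
        _ ≤ 2^(8^k) := pow_le_pow_right₀ (by norm_num) (Nat.one_le_pow _ _ (by norm_num))) hM
    have hv : 3*M'^6 ≤ 4*(r^6+r^3*s^3+s^6) := by
      rcases max_choice |r| |s| with hh | hh
      · have : M'^6 = r^6 := by rw [hM', hh]; exact Even.pow_abs (by decide) r
        rw [this]; nlinarith [sq_nonneg (r^3+2*s^3)]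
      · have : M'^6 = s^6 := by rw [hM', hh]; exact Even.pow_abs (by decide) s
        rw [this]; nlinarith [sq_nonneg (2*r^3+s^3)]
    have hxM : |x| ≤ M := le_max_left _ _
    have hyM : |y| ≤ M := le_max_right _ _
    have hM0 : 0 ≤ M := le_trans (abs_nonneg x) hxM
    have hup : x^2-x*y+y^2 ≤ 3*M^2 := by
      have h1 : x^2 ≤ M^2 := by rw [← sq_abs x]; exact pow_le_pow_left₀ (abs_nonneg x) hxM 2
      have h2 : y^2 ≤ M^2 := by rw [← sq_abs y]; exact pow_le_pow_left₀ (abs_nonneg y) hyM 2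
      nlinarith [sq_nonneg (x+y)]
    rw [b5] at hup
    set v := r^6+r^3*s^3+s^6
    have h3 : (3*M'^6)^3 ≤ (4*v)^3 := pow_le_pow_left₀ (by positivity) hv 3
    have h4 : (M'^8)^2 ≤ M^2 := by
      have : 27*M'^18 ≤ 64 * M^2 := by nlinarith
      have h5 : (4:ℤ) ≤ M'^2 := by nlinarith
      have h6 : 4*M'^16 ≤ M'^18 := by
        have : M'^18 = M'^2*M'^16 := by ring
        rw [this]; gcongr
      have h7 : (0:ℤ) ≤ M'^16 := by positivity
      have : (M'^8)^2 = M'^16 := by ring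
      rw [this]; linarith
    have h8 : M'^8 ≤ M := le_of_pow_le_pow_left₀ (by norm_num) hM0 h4
    calc (2:ℤ)^(8^(k+1)) = (2^(8^k))^8 := by rw [← pow_mul, pow_succ]
      _ ≤ M'^8 := pow_le_pow_left₀ (by positivity) hM 8
      _ ≤ M := h8

def svL : ℕ → List (ℕ × ℕ × ℕ)
  | 0 => [
    (5,4,1), (5,4,3), (11,5,3), (17,16,4), (17,16,6), (17,16,12), (23,11,1), (23,11,6), (23,11,8),
    (23,11,9), (23,11,10), (29,28,2), (29,28,4), (29,28,6), (29,28,12), (29,28,26), (31,30,6),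
    (31,30,16), (31,30,26), (43,42,2), (43,42,4), (43,42,6), (43,42,10), (43,42,16), (43,42,18),
    (43,42,20), (43,42,24), (43,42,30), (43,42,32), (43,42,34), (43,42,38), (47,23,1), (47,23,9),
    (47,23,11), (47,23,14), (47,23,15), (47,23,19), (53,52,8), (53,52,16), (53,52,18), (53,52,44),
    (53,52,46), (59,29,3), (59,29,8), (59,29,19), (61,10,2), (61,10,4), (67,22,2), (71,35,15),
    (79,78,10), (79,78,30), (79,78,38), (79,78,64), (83,41,10), (83,41,40), (89,88,16),
    (89,88,48), (103,34,8), (107,53,31), (113,112,14), (151,50,10), (151,50,30), (151,50,40),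
    (157,78,50), (193,16,2)]
  | 1 => [
    (5,4,2), (5,4,3), (17,16,1), (17,16,4), (19,18,4), (19,18,10), (19,18,16), (23,11,4),
    (23,11,5), (23,11,7), (23,11,9), (23,11,10), (29,28,1), (29,28,4), (29,28,8), (29,28,9),
    (29,28,16), (29,28,20), (31,30,6), (31,30,8), (31,30,18), (31,30,26), (37,18,1), (37,18,3),
    (37,18,5), (37,18,7), (37,18,9), (37,18,11), (37,18,13), (37,18,15), (37,18,17), (41,8,5),
    (43,42,12), (43,42,26), (47,23,3), (47,23,15), (47,23,22), (53,52,4), (53,52,20), (53,52,32),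
    (53,52,36), (53,52,44), (61,10,2), (61,10,7), (67,22,2), (67,22,6), (67,22,8), (67,22,14),
    (71,35,24), (79,78,42), (89,88,56), (97,48,8), (97,48,12), (97,48,24), (97,48,44),
    (109,27,17), (151,50,4)]
  | 2 => [
    (11,5,2), (17,16,4), (17,16,5), (17,16,7), (17,16,12), (17,16,13), (17,16,15), (19,18,2),
    (19,18,8), (19,18,14), (23,11,3), (23,11,4), (29,28,6), (29,28,10), (29,28,26), (31,30,3),
    (31,30,5), (31,30,9), (31,30,13), (31,30,15), (31,30,19), (31,30,23), (31,30,25), (31,30,29),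
    (43,42,6), (43,42,10), (43,42,12), (43,42,24), (43,42,34), (43,42,40), (47,23,1), (47,23,2),
    (47,23,6), (47,23,8), (47,23,10), (47,23,11), (47,23,15), (47,23,18), (47,23,20), (53,52,2),
    (53,52,12), (53,52,14), (53,52,20), (53,52,26), (53,52,28), (53,52,36), (53,52,42), (59,29,3),
    (59,29,5), (59,29,6), (59,29,8), (59,29,12), (59,29,17), (59,29,18), (59,29,21), (59,29,25),
    (59,29,28), (61,10,1), (61,10,6), (61,10,8), (67,22,6), (67,22,16), (67,22,20), (71,35,14),
    (71,35,25), (79,78,72), (83,41,1), (83,41,2), (83,41,38), (83,41,40), (89,88,8), (89,88,66),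
    (97,48,6), (97,48,18), (97,48,22), (97,48,30), (97,48,34), (97,48,46), (101,100,30),
    (101,100,40), (101,100,70), (101,100,80), (101,100,94), (103,34,6), (103,34,12), (103,34,26),
    (103,34,32), (107,53,43), (113,112,8), (113,112,32), (113,112,42), (113,112,56), (127,126,28),
    (131,65,10), (131,65,29), (139,138,96), (139,138,114), (151,50,4), (151,50,34), (157,78,24),
    (251,125,65), (307,34,30), (337,168,16)]
  | 3 => [
    (5,4,1), (5,4,2), (11,5,1), (11,5,2), (17,16,8), (17,16,11), (19,18,1), (19,18,7), (19,18,13),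
    (29,28,3), (29,28,11), (29,28,12), (29,28,19), (29,28,20), (29,28,27), (31,30,4), (31,30,14),
    (31,30,24), (41,8,4), (47,23,2), (47,23,3), (47,23,8), (47,23,11), (47,23,12), (47,23,13),
    (47,23,16), (47,23,19), (47,23,21), (47,23,22), (53,52,7), (53,52,11), (53,52,24), (59,29,7),
    (59,29,8), (59,29,9), (59,29,10), (59,29,11), (59,29,12), (59,29,13), (59,29,16), (59,29,23),
    (59,29,25), (59,29,26), (61,10,8), (61,10,9), (67,22,7), (67,22,9), (67,22,10), (67,22,18),
    (67,22,21), (71,35,25), (71,35,30), (79,78,6), (79,78,22), (79,78,71), (83,41,4), (83,41,11),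
    (83,41,15), (83,41,16), (83,41,25), (83,41,35), (83,41,40), (89,88,15), (89,88,23),
    (89,88,39), (89,88,56), (89,88,72), (97,48,15), (97,48,47), (101,100,3), (101,100,23),
    (101,100,35), (101,100,83), (101,100,95), (107,53,18), (113,112,80), (151,50,10), (151,50,20),
    (151,50,30), (151,50,43), (173,172,59), (193,16,3)]
  | 4 => [
    (5,4,1), (5,4,3), (11,5,3), (11,5,4), (17,16,2), (17,16,10), (17,16,12), (19,18,4),
    (19,18,10), (19,18,16), (23,11,2), (23,11,3), (29,28,6), (29,28,10), (29,28,20), (29,28,24),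
    (43,42,2), (43,42,8), (43,42,30), (43,42,36), (47,23,1), (47,23,4), (47,23,6), (47,23,8),
    (47,23,11), (47,23,13), (47,23,18), (47,23,20), (47,23,21), (53,52,2), (53,52,4), (53,52,14),
    (53,52,16), (53,52,24), (53,52,26), (53,52,38), (53,52,40), (53,52,42), (53,52,50), (59,29,1),
    (59,29,4), (59,29,8), (59,29,14), (59,29,23), (61,10,6), (67,22,4), (67,22,8), (67,22,16),
    (71,35,5), (79,78,6), (79,78,8), (79,78,32), (79,78,48), (79,78,60), (79,78,74), (83,41,3),
    (83,41,10), (83,41,36), (83,41,39), (83,41,40), (89,88,6), (89,88,72), (97,48,14), (97,48,30),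
    (101,100,12), (101,100,40), (101,100,72), (103,34,16), (103,34,30), (107,53,23), (107,53,25),
    (107,53,32), (109,27,21), (113,112,84), (137,136,80), (139,138,42), (151,50,2), (151,50,32),
    (157,78,20), (163,162,14), (173,172,76), (193,16,8)]
  | 5 => [
    (5,4,2), (5,4,3), (11,5,3), (17,16,8), (17,16,12), (19,18,1), (19,18,2), (19,18,7), (19,18,8),
    (19,18,13), (19,18,14), (23,11,2), (23,11,3), (23,11,5), (23,11,7), (23,11,8), (29,28,4),
    (29,28,5), (29,28,12), (29,28,16), (29,28,24), (29,28,25), (31,30,11), (31,30,12), (31,30,17),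
    (31,30,21), (31,30,22), (31,30,27), (41,8,1), (47,23,4), (47,23,5), (47,23,6), (47,23,16),
    (47,23,21), (47,23,22), (53,52,16), (53,52,33), (53,52,44), (53,52,48), (59,29,1), (59,29,5),
    (59,29,6), (59,29,10), (59,29,11), (59,29,13), (59,29,18), (59,29,20), (59,29,21), (59,29,23),
    (59,29,28), (61,10,4), (61,10,9), (67,22,1), (67,22,6), (67,22,10), (67,22,11), (67,22,15),
    (67,22,17), (71,35,1), (71,35,10), (79,78,4), (79,78,28), (79,78,29), (79,78,53), (79,78,54),
    (89,88,4), (89,88,12), (89,88,44), (101,100,5), (101,100,20), (101,100,40), (101,100,45),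
    (101,100,60), (101,100,65), (103,34,6), (107,53,36), (109,27,23), (113,112,48), (113,112,84),
    (139,138,72), (151,50,25), (197,196,28), (199,198,64)]
  | _ => []

def allB : ℕ → (ℕ → Bool) → Bool
  | 0, _ => true
  | n+1, f => f n && allB n f

lemma allB_spec (n : ℕ) (f : ℕ → Bool) (h : allB n f = true) : ∀ i < n, f i = true := by
  induction n with
  | zero => intro i hi; omega
  | succ n ih =>
    simp only [allB, Bool.and_eq_true] at h
    intro i hi
    rcases Nat.lt_succ_iff_lt_or_eq.1 hi with hi | rfl
    · exact ih h.2 i hi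
    · exact h.1

def svGood (K : ℕ) (e : ℕ × ℕ × ℕ) : Bool :=
  Nat.ble 2 e.1 && allB e.1 (fun d => Nat.ble d 1 || !Nat.beq (e.1 % d) 0) &&
  Nat.beq (3^e.2.1 % e.1) 1 && Nat.ble 1 e.2.1 &&
  !Nat.beq (K * (3^e.2.2 % e.1)^3 % e.1) 1 &&
  allB e.1 (fun x => !Nat.beq ((x^3+1) % e.1) (K * ((3^e.2.2 % e.1)*x+1)^3 % e.1))

def svD (o : ℕ) : ℕ → ℕ
  | 0 => 1
  | k+1 => svD o k * (2^(o*2^k) + 1)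

lemma svD_spec (o : ℕ) (ho : 1 ≤ o) (k : ℕ) : svD o k < 2^(o*2^k) ∧ ∀ i, (svD o k).testBit i = true → o ∣ i := by
  induction k with
  | zero =>
    refine ⟨?_, ?_⟩
    · simp only [svD, pow_zero, mul_one]; exact Nat.one_lt_two_pow (by omega)
    · intro i hi
      simp only [svD] at hi
      have : i = 0 := by simpa [Nat.testBit_one_eq_true_iff_self_eq_zero] using hi
      simp [this]
  | succ k ih =>
    obtain ⟨h1, h2⟩ := ih
    have e : svD o (k+1) = 2^(o*2^k) * svD o k + svD o k := by simp only [svD]; ring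
    have e2 : 2^(o*2^(k+1)) = 2^(o*2^k) * 2^(o*2^k) := by rw [← pow_add]; congr 1; ring
    refine ⟨?_, ?_⟩
    · rw [e, e2]; nlinarith
    · intro i hi
      rw [e, Nat.testBit_two_pow_mul_add _ h1] at hi
      split_ifs at hi with hlt
      · exact h2 i hi
      · have := h2 _ hi
        have h3 : o ∣ o*2^k := dvd_mul_right _ _
        have h4 := dvd_add this h3
        rwa [Nat.sub_add_cancel (by omega)] at h4

def svK (o : ℕ) : ℕ → ℕ
  | 0 => 0
  | f+1 => svK o f + cond (Nat.ble (o*2^f) 51000) 1 0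

def svCov : List (ℕ × ℕ × ℕ) → ℕ
  | [] => 1
  | e :: t => Nat.lor (svCov t) (Nat.shiftLeft (svD e.2.1 (svK e.2.1 16)) e.2.2)

lemma svCov_spec (L : List (ℕ × ℕ × ℕ)) (hL : ∀ e ∈ L, 1 ≤ e.2.1) (i : ℕ) (h : (svCov L).testBit i = true) :
    i = 0 ∨ ∃ e ∈ L, ∃ j, i = e.2.2 + e.2.1 * j := by
  induction L with
  | nil =>
    left
    simp only [svCov] at h
    simpa [Nat.testBit_one_eq_true_iff_self_eq_zero] using h
  | cons e t ih =>
    have e1 : svCov (e :: t) = svCov t ||| (svD e.2.1 (svK e.2.1 16)) <<< e.2.2 := rfl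
    rw [e1, Nat.testBit_or, Bool.or_eq_true, Nat.testBit_shiftLeft, Bool.and_eq_true] at h
    rcases h with h | ⟨h1, h2⟩
    · rcases ih (fun e he => hL e (List.mem_cons_of_mem _ he)) h with h | ⟨e', he', j, hj⟩
      · exact Or.inl h
      · exact Or.inr ⟨e', List.mem_cons_of_mem _ he', j, hj⟩
    · right
      obtain ⟨j, hj⟩ := (svD_spec _ (hL e List.mem_cons_self) _).2 _ h2
      have h1' : e.2.2 ≤ i := by simpa using h1
      exact ⟨e, List.mem_cons_self, j, by omega⟩

def svCheck (b : ℕ) : Bool :=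
  List.all (svL b) (svGood (3^(3*b+2))) && Nat.beq (svCov (svL b) % 2^51000) (2^51000 - 1)

lemma svGood_kill (b c : ℕ) (p o r j : ℕ) (hg : svGood (3^(3*b+2)) (p, o, r) = true) (hc : c = r + o*j)
    (x y : ℤ) (hxy : IsCoprime x y) (h : x^3+y^3 = 9*27^b*(3^c*x+y)^3) : False := by
  simp only [svGood, Bool.and_eq_true, Nat.ble_eq, Nat.beq_eq, Bool.not_eq_true'] at hg
  obtain ⟨⟨⟨⟨⟨h2, hpr⟩, ho⟩, ho1⟩, hinf⟩, haff⟩ := hg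
  have hprime : p.Prime := by
    rw [Nat.prime_def_lt]
    refine ⟨h2, fun d hd hdv => ?_⟩
    have := allB_spec _ _ hpr d hd
    rw [Bool.or_eq_true] at this
    rcases this with this | this
    · rw [Nat.ble_eq] at this
      rcases Nat.eq_zero_or_pos d with rfl | hd0
      · simp at hdv; omega
      · omega
    · rw [Nat.mod_eq_zero_of_dvd hdv] at this
      simp at this
  have : Fact p.Prime := ⟨hprime⟩
  set K := 3^(3*b+2) with hK
  set T := 3^r % p with hT
  have hTz : ((T:ℕ) : ZMod p) = 3^c := by
    rw [hT, ZMod.natCast_mod, hc, pow_add, pow_mul]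
    have : ((3:ZMod p))^o = 1 := by
      have h1 : (((3^o % p : ℕ)) : ZMod p) = ((1:ℕ) : ZMod p) := by rw [ho]
      rw [ZMod.natCast_mod] at h1
      push_cast at h1; exact h1
    rw [this]; push_cast; ring
  have hKz : ((K:ℕ) : ZMod p) = 9*27^b := by
    rw [hK]; push_cast; rw [pow_add, pow_mul]; norm_num; ring
  have hz : (x:ZMod p)^3 + (y:ZMod p)^3 = K*(T*x+y)^3 := by
    rw [hKz, hTz]; exact_mod_cast congrArg (fun t : ℤ => (t : ZMod p)) h
  by_cases hy : (y:ZMod p) = 0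
  · have hx : (x:ZMod p) ≠ 0 := by
      intro hx
      rw [ZMod.intCast_zmod_eq_zero_iff_dvd] at hx hy
      obtain ⟨s, t, hst⟩ := hxy
      have : (p:ℤ) ∣ 1 := by rw [← hst]; exact dvd_add (hx.mul_left _) (hy.mul_left _)
      have := Int.natAbs_dvd_natAbs.2 this
      simp at this
      omega
    rw [hy] at hz
    have h3 : (x:ZMod p)^3 ≠ 0 := pow_ne_zero 3 hx
    have h4 : ((K:ZMod p)*T^3) = 1 := by
      apply mul_right_cancel₀ h3
      linear_combination -hz
    have h5 : ((K*T^3 : ℕ) : ZMod p) = ((1:ℕ) : ZMod p) := by push_cast; exact_mod_cast h4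
    rw [ZMod.natCast_eq_natCast_iff', Nat.mod_eq_of_lt (show 1 < p by omega)] at h5
    rw [h5] at hinf
    simp at hinf
  · set ξ : ZMod p := (x:ZMod p) / y with hξ
    have hx : (x:ZMod p) = ξ * y := by rw [hξ]; field_simp
    rw [hx] at hz
    have h3 : (y:ZMod p)^3 ≠ 0 := pow_ne_zero 3 hy
    have h4 : ξ^3 + 1 = K*(T*ξ+1)^3 := by
      apply mul_right_cancel₀ h3
      linear_combination hz
    have h6 := allB_spec _ _ haff ξ.val (ZMod.val_lt ξ)
    have h5 : ((ξ.val^3+1 : ℕ) : ZMod p) = ((K*(T*ξ.val+1)^3 : ℕ) : ZMod p) := by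
      push_cast
      rw [ZMod.natCast_zmod_val]
      exact_mod_cast h4
    rw [ZMod.natCast_eq_natCast_iff'] at h5
    rw [h5] at h6
    simp at h6

lemma svCheck_all : allB 6 svCheck = true := by decide +kernel

theorem sieve (b c : ℕ) (hb : b ≤ 5) (hc : 1 ≤ c) (hc2 : c < 51000) (x y : ℤ) (hxy : IsCoprime x y)
    (h : x^3+y^3 = 9*27^b*(3^c*x+y)^3) : False := by
  have hch := allB_spec _ _ svCheck_all b (by omega)
  simp only [svCheck, Bool.and_eq_true, List.all_eq_true] at hch
  obtain ⟨h1, h2⟩ := hch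
  have h2 := Nat.eq_of_beq_eq_true h2
  have hbit : (svCov (svL b)).testBit c = true := by
    have h3 := congrArg (fun t => Nat.testBit t c) h2
    simp only [Nat.testBit_mod_two_pow, Nat.testBit_two_pow_sub_one, hc2, decide_true, Bool.true_and] at h3
    exact h3
  have hL : ∀ e ∈ svL b, 1 ≤ e.2.1 := by
    intro e he
    have := h1 e he
    simp only [svGood, Bool.and_eq_true, Nat.ble_eq] at this
    exact this.1.1.2
  rcases svCov_spec _ hL c hbit with h0 | ⟨⟨p, o, r⟩, he, j, hj⟩
  · omega
  · exact svGood_kill b c p o r j (h1 _ he) hj x y hxy h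

lemma eight_growth (b : ℕ) (hb : 6 ≤ b) : 6000*(3*b+2) ≤ 8^b := by
  induction b, hb using Nat.le_induction with
  | base => norm_num
  | succ b hb ih => rw [pow_succ]; omega

lemma core_pos (b c : ℕ) (hc : 1 ≤ c) (x y : ℤ) (hxy : IsCoprime x y) (hy : 0 < y)
    (h : x^3+y^3 = 9*27^b*(3^c*x+y)^3) : False := by
  have hK : (9:ℤ) ≤ 9*27^b := by
    have : (1:ℤ) ≤ 27^b := one_le_pow₀ (by norm_num)
    linarith
  have hD : (3:ℤ) ≤ 3^c := by
    calc (3:ℤ) = 3^1 := by norm_num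
      _ ≤ 3^c := pow_le_pow_right₀ (by norm_num) hc
  have hx : x < 0 := by
    by_contra hx
    push Not at hx
    have h1 : x + y ≤ 3^c*x+y := by nlinarith
    have h2 : (x+y)^3 ≤ (3^c*x+y)^3 := pow_le_pow_left₀ (by linarith) h1 3
    have h3 : 0 < (x+y)^3 := by positivity
    have h4 : x^3+y^3 ≤ (x+y)^3 := by
      have : 0 ≤ 3*x*y*(x+y) := by positivity
      nlinarith
    nlinarith
  obtain ⟨X, rfl⟩ : ∃ X, x = -X := ⟨-x, by ring⟩
  have hX : 0 < X := by linarith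
  have hw0 : (3:ℤ)^c*(-X)+y ≠ 0 := by
    intro h0
    rw [h0] at h
    have h1 : X^3 = y^3 := by linear_combination -h
    have h2 : X = y := (Odd.strictMono_pow (by decide : Odd 3)).injective h1
    nlinarith
  have hw : 0 < (3:ℤ)^c*(-X)+y := by
    by_contra hneg
    have hneg' : 0 < 3^c*X - y := by
      rcases lt_or_gt_of_ne hw0 with h1 | h1
      · linarith
      · exact absurd h1 hneg
    have e : X^3 - y^3 = 9*27^b*(3^c*X-y)^3 := by linear_combination -h
    have h3 : 0 < (3^c*X-y)^3 := by positivity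
    have h4 : y^3 < X^3 := by nlinarith
    have h5 : y < X := lt_of_pow_lt_pow_left₀ 3 hX.le h4
    have h6 : X ≤ 3^c*X-y := by nlinarith
    have h7 : X^3 ≤ (3^c*X-y)^3 := pow_le_pow_left₀ hX.le h6 3
    have h8 : 0 < y^3 := by positivity
    nlinarith
  have hDy : 3^c ≤ y := by nlinarith
  have hXy : X < y := by nlinarith
  have hXK : X ≤ 9*27^b - 1 := by
    apply Int.le_of_dvd (by linarith)
    have h1 : X ∣ (9*27^b - 1) * y^3 := by
      refine ⟨-X^2 - 9*27^b*(-(3^c)^3*X^2 + 3*(3^c)^2*X*y - 3*3^c*y^2), ?_⟩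
      linear_combination -h
    have h2 : IsCoprime X (y^3) := (IsCoprime.neg_left_iff X y |>.1 hxy).pow_right
    exact h2.dvd_of_dvd_mul_right h1
  have hK3 : (9*27^b : ℤ) = 3^(3*b+2) := by rw [pow_add, pow_mul]; norm_num; ring
  rw [hK3] at hXK
  have h27 : (27:ℤ)^b = (3^b)^3 := by rw [← pow_mul, mul_comm, pow_mul]; norm_num
  have hdesc := descent b (-X) y (3^b*(3^c*(-X)+y)) hxy (by rw [h, h27]; ring)
    (mul_ne_zero (by positivity) hw0) (dvd_mul_right _ _)
  have hmax : max |(-X)| |y| = y := by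
    rw [abs_neg, abs_of_pos hX, abs_of_pos hy]; exact max_eq_right hXy.le
  rw [hmax] at hdesc
  -- to naturals
  have hcop := hxy
  have horig := h
  obtain ⟨z, hz⟩ : ∃ z : ℤ, z = 3^b*(3^c*(-X)+y) := ⟨_, rfl⟩
  have hz0 : 0 < z := by rw [hz]; positivity
  have hyz : y^3 = X^3 + 9*z^3 := by rw [hz]; rw [h27] at h; linear_combination h
  have hXlt : X ≤ 3^(3*b+2) := by linarith
  lift X to ℕ using hX.le with X'
  lift y to ℕ using hy.le with y'
  lift z to ℕ using hz0.le with z'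
  have hyzN : y'^3 = X'^3 + 9*z'^3 := by exact_mod_cast hyz
  have hXN : 0 < X' := by exact_mod_cast hX
  have hXltN : X' ≤ 3^(3*b+2) := by exact_mod_cast hXlt
  have hDyN : 3^c ≤ y' := by exact_mod_cast hDy
  have hdescN : 2^(8^b) ≤ y' := by exact_mod_cast hdesc
  have hXp : X'^3000 ≤ 3^((3*b+2)*3000) := by
    rw [pow_mul]; exact Nat.pow_le_pow_left hXltN 3000
  by_cases hb : b ≤ 5
  · by_cases hc2 : c < 51000
    · exact sieve b c hb hc hc2 _ _ hcop horig
    · have h1 : 3^51000 ≤ y' := le_trans (Nat.pow_le_pow_right (by norm_num) (by omega)) hDyN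
      exact eff_measure X' y' z' hyzN hXN h1 (le_trans hXp (le_trans (Nat.pow_le_pow_right (by norm_num) (by omega)) h1))
  · have hb6 : 6 ≤ b := by omega
    have hg := eight_growth b hb6
    have key : ∀ n, 2*n ≤ 8^b → 3^n ≤ y' := by
      intro n hn
      calc 3^n ≤ 4^n := Nat.pow_le_pow_left (by norm_num) n
        _ = 2^(2*n) := by rw [pow_mul]; norm_num
        _ ≤ 2^(8^b) := Nat.pow_le_pow_right (by norm_num) hn
        _ ≤ y' := hdescN
    exact eff_measure X' y' z' hyzN hXN (key _ (by omega)) (le_trans hXp (key _ (by omega)))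

lemma core (b c : ℕ) (hc : 1 ≤ c) (x y : ℤ) (hxy : IsCoprime x y)
    (h : x^3+y^3 = 9*27^b*(3^c*x+y)^3) : False := by
  rcases lt_trichotomy y 0 with hy | hy | hy
  · refine core_pos b c hc (-x) (-y) ((IsCoprime.neg_neg_iff x y).2 hxy) (by linarith) (by linear_combination -h)
  · subst hy
    rw [isCoprime_zero_right, Int.isUnit_iff] at hxy
    have hK : (1:ℤ) ≤ 27^b * (3^c)^3 := by
      have h1 : (1:ℤ) ≤ 27^b := one_le_pow₀ (by norm_num)
      have h2 : (1:ℤ) ≤ (3^c)^3 := one_le_pow₀ (one_le_pow₀ (by norm_num))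
      nlinarith
    rcases hxy with rfl | rfl
    · have : (1:ℤ) = 9*(27^b*(3^c)^3) := by linear_combination h
      linarith
    · have : (1:ℤ) = 9*(27^b*(3^c)^3) := by linear_combination -h
      linarith
  · exact core_pos b c hc x y hxy hy h

lemma core_rat (b c : ℕ) (hc : 1 ≤ c) (x y : ℚ) (h0 : ¬ (x = 0 ∧ y = 0))
    (h : x^3+y^3 = 9*27^b*(3^c*x+y)^3) : False := by
  have hx : (x.num:ℚ) = x * x.den := (Rat.mul_den_eq_num x).symm
  have hy : (y.num:ℚ) = y * y.den := (Rat.mul_den_eq_num y).symm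
  obtain ⟨m, hm⟩ : ∃ m : ℤ, m = x.num * y.den := ⟨_, rfl⟩
  obtain ⟨n, hn⟩ : ∃ n : ℤ, n = y.num * x.den := ⟨_, rfl⟩
  have hmq : (m:ℚ) = x * (x.den * y.den) := by rw [hm]; push_cast; rw [hx]; ring
  have hnq : (n:ℚ) = y * (x.den * y.den) := by rw [hn]; push_cast; rw [hy]; ring
  have hmn : m^3+n^3 = 9*27^b*(3^c*m+n)^3 := by
    have : (m:ℚ)^3+(n:ℚ)^3 = 9*27^b*(3^c*(m:ℚ)+(n:ℚ))^3 := by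
      rw [hmq, hnq]
      linear_combination ((x.den:ℚ) * y.den)^3 * h
    exact_mod_cast this
  have hg : 0 < Int.gcd m n := by
    rw [Int.gcd_pos_iff]
    by_contra hcon
    push Not at hcon
    obtain ⟨h1, h2⟩ := hcon
    apply h0
    have hd : (x.den:ℚ) * y.den ≠ 0 := by
      have := x.den_nz; have := y.den_nz; positivity
    constructor
    · rw [h1] at hmq
      rcases mul_eq_zero.1 (by simpa using hmq.symm : x * ((x.den:ℚ) * y.den) = 0) with h | h
      · exact h
      · exact absurd h hd
    · rw [h2] at hnq
      rcases mul_eq_zero.1 (by simpa using hnq.symm : y * ((x.den:ℚ) * y.den) = 0) with h | h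
      · exact h
      · exact absurd h hd
  obtain ⟨m', n', hc', h1, h2⟩ := Int.exists_gcd_one hg
  set g := Int.gcd m n
  have hgz : ((g:ℤ))^3 ≠ 0 := by positivity
  refine core b c hc m' n' (Int.isCoprime_iff_gcd_eq_one.2 hc') ?_
  apply mul_right_cancel₀ hgz
  rw [h1, h2] at hmn
  linear_combination hmn

/-- **Conjecture 3.3 (Brassil–Reichstein, `conj:system BR`), proved in the paper:**
the system `Z₁³ + Z₂³ + 9Z₃³ = 0`, `3^a Z₁ + 3^b Z₂ + Z₃ = 0` has no solution
`(a, b, [Z₁:Z₂:Z₃])` where `a > b ≥ 0` are integers and `[Z₁:Z₂:Z₃] ∈ ℙ²(ℚ)`. -/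
theorem brassil_reichstein_conjecture :
    ¬ ∃ (a b : ℕ) (p : Projectivization ℚ (Fin 3 → ℚ)) (Z : Fin 3 → ℚ) (hZ : Z ≠ 0),
      b < a ∧ p = Projectivization.mk ℚ Z hZ ∧
      Z 0 ^ 3 + Z 1 ^ 3 + 9 * Z 2 ^ 3 = 0 ∧
      (3 : ℚ) ^ a * Z 0 + (3 : ℚ) ^ b * Z 1 + Z 2 = 0 := by
  rintro ⟨a, b, -, Z, hZ, hab, -, h1, h2⟩
  obtain ⟨c, rfl⟩ : ∃ c, a = b + c := ⟨a - b, by omega⟩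
  have h27 : (27:ℚ)^b = (3^b)^3 := by rw [← pow_mul, mul_comm, pow_mul]; norm_num
  have e : Z 2 = -(3^b*(3^c*Z 0 + Z 1)) := by rw [pow_add] at h2; linear_combination h2
  refine core_rat b c (by omega) (Z 0) (Z 1) ?_ ?_
  · rintro ⟨z0, z1⟩
    apply hZ
    funext i
    fin_cases i
    · exact z0
    · exact z1
    · simp [e, z0, z1]
  · rw [e] at h1; rw [h27]; linear_combination h1
end

section
/- Let b ≥ 0 and w be integers with 3^{b+1} ∣ w, and let z₁, z₂, z₃ be nonzero integers with gcd(z₁, z₂, z₃) = 1 satisfying z₁³ + z₂³ + 9z₃³ = 0 and wz₁ + 3^b z₂ + z₃ = 0. Then 3 ∤ z₁z₂, there is an integer z₄ with 3 ∤ z₄ and −z₃ = 3^b z₄, and z₁ divides 3^{3b+2} − 1. Consequently |z₂³ + 9z₃³| = |z₁|³ < 3^{9b+6}. -/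
/-- **First step of the proof of Theorem `thm:new system`:** if `3^{b+1} ∣ w` and nonzero
coprime integers `z₁, z₂, z₃` satisfy `z₁³ + z₂³ + 9z₃³ = 0` and `wz₁ + 3^b z₂ + z₃ = 0`,
then `3 ∤ z₁z₂`, `-z₃ = 3^b z₄` with `3 ∤ z₄`, `z₁ ∣ 3^{3b+2} - 1`, and consequently
`|z₂³ + 9z₃³| = |z₁|³ < 3^{9b+6}`. -/
theorem divisibility_and_bound_of_solution
    (b : ℕ) (w z₁ z₂ z₃ : ℤ) (hw : (3 : ℤ) ^ (b + 1) ∣ w)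
    (hz₁ : z₁ ≠ 0) (hz₂ : z₂ ≠ 0) (hz₃ : z₃ ≠ 0)
    (hgcd : Int.gcd (Int.gcd z₁ z₂) z₃ = 1)
    (e₁ : z₁ ^ 3 + z₂ ^ 3 + 9 * z₃ ^ 3 = 0)
    (e₂ : w * z₁ + 3 ^ b * z₂ + z₃ = 0) :
    ¬ (3 : ℤ) ∣ z₁ * z₂ ∧
    (∃ z₄ : ℤ, ¬ (3 : ℤ) ∣ z₄ ∧ -z₃ = 3 ^ b * z₄) ∧
    z₁ ∣ 3 ^ (3 * b + 2) - 1 ∧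
    |z₂ ^ 3 + 9 * z₃ ^ 3| = |z₁| ^ 3 ∧
    |z₁| ^ 3 < 3 ^ (9 * b + 6) := by
  obtain ⟨k, rfl⟩ := hw
  have hp : Prime (3 : ℤ) := Int.prime_three
  have hd3 : ((Int.gcd z₁ z₂ : ℕ) : ℤ) ∣ z₃ := by
    have h1 : ((Int.gcd z₁ z₂ : ℕ) : ℤ) ∣ z₁ := Int.gcd_dvd_left ..
    have h2 : ((Int.gcd z₁ z₂ : ℕ) : ℤ) ∣ z₂ := Int.gcd_dvd_right ..
    have : z₃ = -(3 ^ (b + 1) * k * z₁ + 3 ^ b * z₂) := by linarith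
    rw [this]
    exact (dvd_add (h1.mul_left _) (h2.mul_left _)).neg_right
  have hg : Int.gcd z₁ z₂ = 1 := by
    have := Int.dvd_coe_gcd (dvd_refl ((Int.gcd z₁ z₂ : ℕ) : ℤ)) hd3
    rw [hgcd] at this
    exact Nat.dvd_one.mp (by exact_mod_cast this)
  have hc : IsCoprime z₁ z₂ := Int.isCoprime_iff_gcd_eq_one.mpr hg
  have hboth : ¬ ((3 : ℤ) ∣ z₁ ∧ (3 : ℤ) ∣ z₂) := by
    rintro ⟨h1, h2⟩
    exact hp.not_unit (hc.isUnit_of_dvd' h1 h2)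
  have h1 : ¬ (3 : ℤ) ∣ z₁ := fun h => hboth ⟨h, by
    apply hp.dvd_of_dvd_pow (n := 3)
    have e : z₂ ^ 3 = -(z₁ * z₁ ^ 2 + 3 * (3 * z₃ ^ 3)) := by linarith
    rw [e]
    exact (dvd_add (h.mul_right _) (dvd_mul_right _ _)).neg_right⟩
  have h2 : ¬ (3 : ℤ) ∣ z₂ := fun h => hboth ⟨by
    apply hp.dvd_of_dvd_pow (n := 3)
    have e : z₁ ^ 3 = -(z₂ * z₂ ^ 2 + 3 * (3 * z₃ ^ 3)) := by linarith
    rw [e]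
    exact (dvd_add (h.mul_right _) (dvd_mul_right _ _)).neg_right, h⟩
  have hz : z₃ = -(3 ^ b * (3 * (k * z₁) + z₂)) := by
    rw [pow_succ] at e₂
    linarith
  have hdiv : z₁ ∣ 3 ^ (3 * b + 2) - 1 := by
    have hc3 : IsCoprime z₁ (z₂ ^ 3) := hc.pow_right
    apply hc3.dvd_of_dvd_mul_left
    have e3 : (3 : ℤ) ^ (3 * b + 2) = 9 * (3 ^ b) ^ 3 := by
      rw [pow_add, mul_comm 3 b, pow_mul]; ring
    rw [e3]
    rw [hz] at e₁
    generalize (3 : ℤ) ^ b = t at *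
    refine ⟨z₁ ^ 2 - 9 * t ^ 3 * (3 * k) * ((3 * k * z₁) ^ 2 + 3 * (3 * k * z₁) * z₂ + 3 * z₂ ^ 2), ?_⟩
    linear_combination -e₁
  have hlt : |z₁| < 3 ^ (3 * b + 2) := by
    have hpos : (1 : ℤ) < 3 ^ (3 * b + 2) := one_lt_pow₀ (by norm_num) (by omega)
    have := Int.le_of_dvd (by linarith) ((abs_dvd _ _).mpr hdiv)
    linarith
  refine ⟨fun h => (hp.dvd_or_dvd h).elim h1 h2, ⟨3 * (k * z₁) + z₂, ?_, by linarith⟩, hdiv, ?_, ?_⟩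
  · intro h
    exact h2 ((dvd_add_right (dvd_mul_right _ _)).mp h)
  · rw [← abs_pow, show z₂ ^ 3 + 9 * z₃ ^ 3 = -z₁ ^ 3 by linarith, abs_neg]
  · calc |z₁| ^ 3 < (3 ^ (3 * b + 2)) ^ 3 := pow_lt_pow_left₀ hlt (abs_nonneg _) (by norm_num)
      _ = 3 ^ (9 * b + 6) := by rw [← pow_mul]; congr 1; ring
end

section
/- Let b ≥ 0 and w be integers with 3^{b+1} ∣ w, and let z₁, z₂, z₃ be nonzero integers with gcd(z₁, z₂, z₃) = 1 satisfying z₁³ + z₂³ + 9z₃³ = 0 and wz₁ + 3^b z₂ + z₃ = 0, and write −z₃ = 3^b z₄ with 3 ∤ z₄. Then there exist integers α and β such that z₁ + z₂ = 3^{3b+1}α³, z₁² − z₁z₂ + z₂² = 3β³, αβ = z₄, 3 ∤ αβ, and gcd(α, β) = 1. -/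
/-- **Equation (`eq:alpha and beta`) in the proof of Theorem `thm:new system`:** if
`3^{b+1} ∣ w` and nonzero coprime integers `z₁, z₂, z₃` satisfy `z₁³ + z₂³ + 9z₃³ = 0` and
`wz₁ + 3^b z₂ + z₃ = 0`, and `-z₃ = 3^b z₄` with `3 ∤ z₄`, then there are integers `α, β`
with `z₁ + z₂ = 3^{3b+1}α³`, `z₁² - z₁z₂ + z₂² = 3β³`, `αβ = z₄`, `3 ∤ αβ` and
`gcd(α, β) = 1`. -/
theorem exists_alpha_beta_of_solution
    (b : ℕ) (w z₁ z₂ z₃ z₄ : ℤ) (hw : (3 : ℤ) ^ (b + 1) ∣ w)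
    (hz₁ : z₁ ≠ 0) (hz₂ : z₂ ≠ 0) (hz₃ : z₃ ≠ 0)
    (hgcd : Int.gcd (Int.gcd z₁ z₂) z₃ = 1)
    (e₁ : z₁ ^ 3 + z₂ ^ 3 + 9 * z₃ ^ 3 = 0)
    (e₂ : w * z₁ + 3 ^ b * z₂ + z₃ = 0)
    (hz₄ : -z₃ = 3 ^ b * z₄) (h3z₄ : ¬ (3 : ℤ) ∣ z₄) :
    ∃ α β : ℤ,
      z₁ + z₂ = 3 ^ (3 * b + 1) * α ^ 3 ∧
      z₁ ^ 2 - z₁ * z₂ + z₂ ^ 2 = 3 * β ^ 3 ∧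
      α * β = z₄ ∧
      ¬ (3 : ℤ) ∣ α * β ∧
      Int.gcd α β = 1 := by
  obtain ⟨w', rfl⟩ := hw
  have h3b : (3 : ℤ) ^ b ≠ 0 := by positivity
  have hz4 : z₄ = 3 * (w' * z₁) + z₂ := by
    apply mul_left_cancel₀ h3b
    rw [← hz₄, pow_succ] at *
    linear_combination (-1) * e₂
  have h32 : ¬ (3 : ℤ) ∣ z₂ := fun h => h3z₄ (by rw [hz4]; exact dvd_add ⟨_, rfl⟩ h)
  have hp3 : Prime (3 : ℤ) := Int.prime_three
  have hs : (3 : ℤ) ∣ z₁ + z₂ := by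
    apply hp3.dvd_of_dvd_pow (n := 3)
    exact ⟨z₁ ^ 2 * z₂ + z₁ * z₂ ^ 2 - 3 * z₃ ^ 3, by linear_combination e₁⟩
  have h31 : ¬ (3 : ℤ) ∣ z₁ := fun h => h32 ((dvd_add_right h).1 hs)
  have hc12 : IsCoprime z₁ z₂ := by
    refine isCoprime_of_prime_dvd (fun h => hz₁ h.1) ?_
    intro p hp h1 h2
    have h9 : p ∣ 3 ^ 2 * z₃ ^ 3 := by
      have : (3 : ℤ) ^ 2 * z₃ ^ 3 = z₁ * (-z₁ ^ 2) + z₂ * (-z₂ ^ 2) := by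
        linear_combination e₁
      rw [this]
      exact dvd_add (h1.mul_right _) (h2.mul_right _)
    have h3 : p ∣ z₃ := by
      rcases hp.dvd_or_dvd h9 with h | h
      · have := hp.dvd_of_dvd_pow h
        exact absurd (((hp.associated_of_dvd hp3 this).symm.dvd).trans h2) h32
      · exact hp.dvd_of_dvd_pow h
    have := Int.dvd_coe_gcd (Int.dvd_coe_gcd h1 h2) h3
    rw [hgcd] at this
    exact hp.not_isUnit (isUnit_of_dvd_one (by simpa using this))
  obtain ⟨s, hs⟩ := hs
  have hst0 : s * (3 * s ^ 2 - z₁ * z₂) = 3 ^ (3 * b) * z₄ ^ 3 := by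
    have hz3 : z₃ = -(3 ^ b * z₄) := by linear_combination -hz₄
    have e : z₂ = 3 * s - z₁ := by linear_combination hs
    have : (3 : ℤ) ^ (3 * b) = (3 ^ b) ^ 3 := by rw [← pow_mul, mul_comm]
    rw [this]
    rw [hz3] at e₁
    generalize (3 : ℤ) ^ b = c at e₁
    apply mul_left_cancel₀ (show (9 : ℤ) ≠ 0 by norm_num)
    rw [e] at e₁ ⊢
    linear_combination e₁
  have ht3 : IsCoprime ((3 : ℤ) ^ (3 * b)) (3 * s ^ 2 - z₁ * z₂) := by
    apply IsCoprime.pow_left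
    rw [Prime.coprime_iff_not_dvd hp3]
    intro h
    have : (3 : ℤ) ∣ z₁ * z₂ := (dvd_sub_right ⟨s ^ 2, rfl⟩).1 h
    rcases hp3.dvd_or_dvd this with h | h
    · exact h31 h
    · exact h32 h
  obtain ⟨u, hu⟩ : (3 : ℤ) ^ (3 * b) ∣ s := ht3.dvd_of_dvd_mul_right ⟨_, hst0⟩
  have hcs : IsCoprime s (z₁ * z₂) := by
    have : IsCoprime (3 * s) (z₁ * z₂) := by
      rw [← hs]
      apply IsCoprime.mul_right
      · have := hc12.symm.add_mul_left_left 1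
        rwa [mul_one, add_comm] at this
      · have := hc12.add_mul_left_left 1
        rwa [mul_one] at this
    exact this.of_mul_left_right
  have hcst : IsCoprime s (3 * s ^ 2 - z₁ * z₂) := by
    have := hcs.neg_right.add_mul_left_right (3 * s)
    rwa [show -(z₁ * z₂) + s * (3 * s) = 3 * s ^ 2 - z₁ * z₂ by ring] at this
  have hcut : IsCoprime u (3 * s ^ 2 - z₁ * z₂) := by
    have h := hcst
    rw [show s = 3 ^ (3 * b) * u from hu] at h
    rw [hu]
    exact h.of_mul_left_right
  have hut : u * (3 * s ^ 2 - z₁ * z₂) = z₄ ^ 3 := by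
    apply mul_left_cancel₀ (show (3 : ℤ) ^ (3 * b) ≠ 0 by positivity)
    rw [← hst0, ← mul_assoc, ← hu]
  have hodd : Odd 3 := by decide
  obtain ⟨α, hα⟩ := Int.eq_pow_of_mul_eq_pow_odd_left hcut hodd hut
  obtain ⟨β, hβ⟩ := Int.eq_pow_of_mul_eq_pow_odd_right hcut hodd hut
  have hab : α * β = z₄ := by
    apply hodd.pow_injective
    simp only [mul_pow]
    rw [← hα, ← hβ, hut]
  refine ⟨α, β, ?_, ?_, hab, hab ▸ h3z₄, ?_⟩
  · rw [hs, hu, hα]; ring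
  · rw [← hβ]
    linear_combination (z₁ + z₂ + 3 * s) * hs
  · rw [hα, hβ] at hcut
    exact Int.isCoprime_iff_gcd_eq_one.1 ((IsCoprime.pow_iff (by norm_num) (by norm_num)).1 hcut)
end
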